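/- For every integer s ≥ 1, the dimension over F_2 of the subspace of GL_4(F_2)-invariants of Q_n in degree n = 3(2^s − 1) + 3·2^s = 6·2^s − 3 (equivalently, the dimension of the coinvariant space F_2 ⊗_{GL_4} P((P_4)_n^*), the domain of Singer's fourth algebraic transfer) equals 0 if s = 2 and equals 1 if s ≠ 2. -/

import Mathlib

/-!
Common setup: the polynomial algebra `P_4 = F_2[x_1,x_2,x_3,x_4]` (variables `X 0, ..., X 3`),
the Steenrod action, hit polynomials, the cohit spaces `Q_n`, and the (induced) actions of
`GL_4(F_2)` and of the symmetric group `Σ_4` on `Q_n`.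
-/

open MvPolynomial

noncomputable section

abbrev kk : Type := ZMod 2
abbrev P4 : Type := MvPolynomial (Fin 4) kk

/-- The total Steenrod square: the algebra endomorphism of `P4` with `X i ↦ X i + (X i)^2`.
For `g` homogeneous of degree `d`, `Sq^t g` is the degree-`d+t` homogeneous component
of `sqTotal g`. -/
def sqTotal : P4 →ₐ[kk] P4 := aeval fun i => X i + X i ^ 2

/-- The homogeneous polynomials of degree `n`, i.e. `(P_4)_n`, as a submodule. -/
def homog (n : ℕ) : Submodule kk P4 := homogeneousSubmodule (Fin 4) kk n

/-- The subspace `H_n` of hit polynomials of degree `n`: it is spanned by the elements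
`Sq^{n-d}(g) = (sqTotal g)_n` for `g` homogeneous of degree `d < n`, i.e. by all
`∑_{t>0} Sq^t(f_t)` with `f_t ∈ (P_4)_{n-t}`. -/
def hitSub (n : ℕ) : Submodule kk P4 :=
  Submodule.span kk
    {p | ∃ d, d < n ∧ ∃ g ∈ homog d, p = homogeneousComponent n (sqTotal g)}

/-- The cohit space `Q_n = (P_4)_n / H_n`. -/
abbrev Qn (n : ℕ) :=
  ↥(homog n) ⧸ ((hitSub n).comap (homog n).subtype)

/-- Projection of a polynomial onto its degree-`n` part, landing in `homog n`. -/
def toHomog (n : ℕ) : P4 →ₗ[kk] homog n :=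
  (homogeneousComponent n).codRestrict (homog n) fun f => homogeneousComponent_mem n f

/-- The class in `Q_n` of (the degree-`n` component of) a polynomial.  For `f`
homogeneous of degree `n` this is the class `[f]` of `f`. -/
def Qmk (n : ℕ) : P4 →ₗ[kk] Qn n :=
  ((hitSub n).comap (homog n).subtype).mkQ.comp (toHomog n)

/-- Substitution action of a matrix `M`: the algebra endomorphism `X i ↦ ∑ j M i j • X j`. -/
def substM (M : Matrix (Fin 4) (Fin 4) kk) : P4 →ₐ[kk] P4 :=
  aeval fun i => ∑ j, M i j • X j

/-- The set of invertible `4 × 4` matrices over `F_2`, i.e. `GL_4(F_2)`. -/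
def glSet : Set (Matrix (Fin 4) (Fin 4) kk) := {M | IsUnit M}

/-- The set of permutation matrices, i.e. `Σ_4 ⊆ GL_4(F_2)`. -/
def permSet : Set (Matrix (Fin 4) (Fin 4) kk) :=
  {M | ∃ σ : Equiv.Perm (Fin 4), M = σ.toPEquiv.toMatrix}

/-- Homogeneous polynomials of degree `n` whose class in `Q_n` is invariant under every
element of `G` (the action on classes being induced by `substM`): for every `M ∈ G`,
`M·f - f` is hit. -/
def invPre (n : ℕ) (G : Set (Matrix (Fin 4) (Fin 4) kk)) : Submodule kk P4 :=
  homog n ⊓ ⨅ M ∈ G, (hitSub n).comap ((substM M).toLinearMap - LinearMap.id)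

/-- The subspace `(Q_n)^G` of `G`-invariant classes in `Q_n`. -/
def QInv (n : ℕ) (G : Set (Matrix (Fin 4) (Fin 4) kk)) : Submodule kk (Qn n) :=
  (invPre n G).map (Qmk n)

/-- The `Σ_4`-submodule of `Q_n` generated by the classes of the polynomials in `S`:
the span of the classes of all the permuted polynomials `σ · f`, `σ ∈ Σ_4`, `f ∈ S`. -/
def permSpan (n : ℕ) (S : Set P4) : Submodule kk (Qn n) :=
  Submodule.span kk
    {c | ∃ σ : Equiv.Perm (Fin 4), ∃ f ∈ S, c = Qmk n (rename (⇑σ) f)}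


theorem homog_ind (n : ℕ) (S : Submodule kk P4)
    (h : ∀ m : Fin 4 →₀ ℕ, m.degree = n → monomial m (1 : kk) ∈ S) : homog n ≤ S := by
  intro f hf
  rw [f.as_sum]
  refine Submodule.sum_mem _ fun m hm => ?_
  have h1 : m.degree = n := by
    have := (mem_homogeneousSubmodule n f).1 hf
    exact (this.degree_eq_sum_deg_support hm).symm
  have : monomial m (coeff m f) = coeff m f • monomial m (1 : kk) := by
    rw [smul_monomial, smul_eq_mul, mul_one]
  rw [this]
  exact S.smul_mem _ (h m h1)

theorem all_ind (S : Submodule kk P4)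
    (h : ∀ m : Fin 4 →₀ ℕ, monomial m (1 : kk) ∈ S) (f : P4) : f ∈ S := by
  rw [f.as_sum]
  refine Submodule.sum_mem _ fun m hm => ?_
  have : monomial m (coeff m f) = coeff m f • monomial m (1 : kk) := by
    rw [smul_monomial, smul_eq_mul, mul_one]
  rw [this]
  exact S.smul_mem _ (h m)

theorem mono_split (m : Fin 4 →₀ ℕ) (k : ℕ) (h : m.degree = k + 1) :
    ∃ (i : Fin 4) (m' : Fin 4 →₀ ℕ), m'.degree = k ∧
      monomial m (1 : kk) = X i * monomial m' 1 := by
  have : ∃ i, m i ≠ 0 := by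
    by_contra hc
    push Not at hc
    have : m = 0 := by ext i; simp [hc i]
    simp [this] at h
  obtain ⟨i, hi⟩ := this
  have hm : m = Finsupp.single i 1 + (m - Finsupp.single i 1) := by
    ext j
    by_cases hj : j = i
    · subst hj; simp; omega
    · simp [Ne.symm hj]
  refine ⟨i, m - Finsupp.single i 1, ?_, ?_⟩
  · rw [hm] at h
    rw [map_add, Finsupp.degree_single] at h
    omega
  · conv_lhs => rw [hm]
    rw [X, monomial_mul, mul_one]

theorem p4_two (f : P4) : f + f = 0 := CharTwo.add_self_eq_zero f

theorem p4_add_sq (f g : P4) : (f + g) ^ 2 = f ^ 2 + g ^ 2 := CharTwo.add_sq f g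

theorem kk_cases (c : kk) : c = 0 ∨ c = 1 := by
  revert c; decide

theorem kk_sq (c : kk) : c * c = c := by
  revert c; decide

/-- squaring as a linear map over `F_2` -/
def frob : P4 →ₗ[kk] P4 where
  toFun f := f ^ 2
  map_add' := p4_add_sq
  map_smul' c f := by
    rcases kk_cases c with h | h <;> simp [h]

theorem frob_apply (f : P4) : frob f = f ^ 2 := rfl

abbrev hc (n : ℕ) : P4 →ₗ[kk] P4 := homogeneousComponent n

theorem hc_self {n : ℕ} {f : P4} (h : f ∈ homog n) : hc n f = f :=
  homogeneousComponent_eq_self h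

theorem hc_of {m n : ℕ} {f : P4} (h : f ∈ homog m) : hc n f = if m = n then f else 0 := by
  rw [homogeneousComponent_of_mem h]; simp only [eq_comm]

theorem hc_mem (n : ℕ) (f : P4) : hc n f ∈ homog n := homogeneousComponent_mem n f

theorem hc_sum (f : P4) : ∃ N, f = ∑ i ∈ Finset.range N, hc i f :=
  ⟨_, (sum_homogeneousComponent f).symm⟩

theorem homog_mul {m n : ℕ} {f g : P4} (hf : f ∈ homog m) (hg : g ∈ homog n) :
    f * g ∈ homog (m + n) := IsHomogeneous.mul hf hg

theorem homog_sq {n : ℕ} {g : P4} (hg : g ∈ homog n) : g ^ 2 ∈ homog (2 * n) := by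
  rw [mul_comm]; exact IsHomogeneous.pow hg 2

theorem homog_X (i : Fin 4) : (X i : P4) ∈ homog 1 := isHomogeneous_X _ i

theorem homog_cast {m n : ℕ} {f : P4} (hf : f ∈ homog m) (h : m = n) : f ∈ homog n := h ▸ hf

/-- two additive maps agreeing on homogeneous elements are equal -/
theorem hom_ext (L L' : P4 →ₗ[kk] P4) (h : ∀ k, ∀ g ∈ homog k, L g = L' g) (f : P4) :
    L f = L' f := by
  obtain ⟨N, hN⟩ := hc_sum f
  rw [hN, map_sum, map_sum]
  exact Finset.sum_congr rfl fun i _ => h i _ (hc_mem i f)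

theorem hc_mul {k n : ℕ} {a : P4} (ha : a ∈ homog k) (b : P4) :
    hc (k + n) (a * b) = a * hc n b := by
  refine hom_ext ((hc (k+n)).comp (LinearMap.mulLeft kk a)) ((LinearMap.mulLeft kk a).comp (hc n))
    ?_ b
  intro j g hg
  simp only [LinearMap.comp_apply, LinearMap.mulLeft_apply]
  rw [hc_of (homog_mul ha hg), hc_of hg]
  by_cases h : j = n
  · simp [h]
  · simp [h]

theorem hc_mul_lt {k n : ℕ} {a : P4} (ha : a ∈ homog k) (b : P4) (h : n < k) :
    hc n (a * b) = 0 := by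
  refine hom_ext ((hc n).comp (LinearMap.mulLeft kk a)) 0 ?_ b
  intro j g hg
  simp only [LinearMap.comp_apply, LinearMap.mulLeft_apply, LinearMap.zero_apply]
  rw [hc_of (homog_mul ha hg), if_neg (by omega)]

theorem hc_sq (n : ℕ) (b : P4) : hc (2 * n) (b ^ 2) = (hc n b) ^ 2 := by
  refine hom_ext ((hc (2*n)).comp frob) (frob.comp (hc n)) ?_ b
  intro j g hg
  simp only [LinearMap.comp_apply, frob_apply]
  rw [hc_of (homog_sq hg), hc_of hg]
  by_cases h : j = n
  · simp [h]
  · simp [h]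

theorem hc_sq_odd (n : ℕ) (b : P4) : hc (2 * n + 1) (b ^ 2) = 0 := by
  refine hom_ext ((hc (2*n+1)).comp frob) 0 ?_ b
  intro j g hg
  simp only [LinearMap.comp_apply, frob_apply, LinearMap.zero_apply]
  rw [hc_of (homog_sq hg), if_neg (by omega)]

theorem hc_asq {k n m : ℕ} {a : P4} (ha : a ∈ homog k) (b : P4) (h : n = k + 2 * m) :
    hc n (a * b ^ 2) = a * (hc m b) ^ 2 := by
  subst h; rw [hc_mul ha, hc_sq]

theorem hc_asq_odd {k n m : ℕ} {a : P4} (ha : a ∈ homog k) (b : P4) (h : n + 1 = k + 2 * m) :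
    hc n (a * b ^ 2) = 0 := by
  by_cases hk : n < k
  · exact hc_mul_lt ha _ hk
  · obtain ⟨j, rfl⟩ : ∃ j, n = k + (2 * j + 1) := ⟨m - 1, by omega⟩
    rw [hc_mul ha, hc_sq_odd, mul_zero]

theorem sq_X (i : Fin 4) : sqTotal (X i) = X i + X i ^ 2 := by simp [sqTotal]

/-- range of degrees, bottom and top components of the total square -/
theorem sq_range (d : ℕ) : ∀ g ∈ homog d, (∀ e, e < d → hc e (sqTotal g) = 0) ∧
    (∀ e, 2 * d < e → hc e (sqTotal g) = 0) ∧ hc d (sqTotal g) = g ∧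
    hc (2 * d) (sqTotal g) = g ^ 2 := by
  let S (d : ℕ) : Submodule kk P4 :=
    (⨅ e, ⨅ _ : e < d, LinearMap.ker ((hc e).comp sqTotal.toLinearMap)) ⊓
    (⨅ e, ⨅ _ : 2 * d < e, LinearMap.ker ((hc e).comp sqTotal.toLinearMap)) ⊓
    LinearMap.ker ((hc d).comp sqTotal.toLinearMap - LinearMap.id) ⊓
    LinearMap.ker ((hc (2*d)).comp sqTotal.toLinearMap - frob)
  have hS : ∀ d g, g ∈ S d ↔ (∀ e, e < d → hc e (sqTotal g) = 0) ∧
    (∀ e, 2 * d < e → hc e (sqTotal g) = 0) ∧ hc d (sqTotal g) = g ∧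
    hc (2 * d) (sqTotal g) = g ^ 2 := by
    intro d g
    simp only [S, Submodule.mem_inf, Submodule.mem_iInf, LinearMap.mem_ker, LinearMap.comp_apply,
      LinearMap.sub_apply, AlgHom.toLinearMap_apply, LinearMap.id_apply, frob_apply, sub_eq_zero,
      and_assoc]
  suffices h : ∀ m : Fin 4 →₀ ℕ, m.degree = d → monomial m (1 : kk) ∈ S d by
    intro g hg
    exact (hS d g).1 (homog_ind d (S d) h hg)
  induction d with
  | zero =>
    intro m hm
    have : m = 0 := (Finsupp.degree_eq_zero_iff m).1 hm
    subst this
    rw [hS]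
    have h1 : (1 : P4) ∈ homog 0 := isHomogeneous_one _ _
    have : (monomial 0 (1 : kk) : P4) = 1 := rfl
    rw [this, map_one]
    refine ⟨by simp, ?_, ?_, ?_⟩
    · intro e he; rw [hc_of h1, if_neg (by omega)]
    · exact hc_self h1
    · rw [one_pow]; exact hc_self h1
  | succ d ih =>
    intro m hm
    obtain ⟨i, m', hm', h⟩ := mono_split m d hm
    rw [h]
    have := (hS d _).1 (ih m' hm')
    set g := monomial m' (1 : kk)
    obtain ⟨h1, h2, h3, h4⟩ := this
    rw [hS]
    have hX := homog_X i
    have hX2 := homog_sq (homog_X i)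
    rw [map_mul, sq_X, add_mul]
    simp only [map_add]
    have key : ∀ e, hc (e + 1) (X i * sqTotal g) = X i * hc e (sqTotal g) := by
      intro e; rw [add_comm, hc_mul hX]
    have key2 : ∀ e, hc (e + 2) (X i ^ 2 * sqTotal g) = X i ^ 2 * hc e (sqTotal g) := by
      intro e; rw [add_comm]; exact hc_mul hX2 _
    refine ⟨?_, ?_, ?_, ?_⟩
    · intro e he
      rcases e with _ | _ | e
      · rw [hc_mul_lt hX _ (by omega), hc_mul_lt hX2 _ (by omega), add_zero]
      · rw [key, hc_mul_lt hX2 _ (by omega), h1 _ (by omega)]; simp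
      · rw [key, key2, h1 _ (by omega), h1 _ (by omega)]; simp
    · intro e he
      rcases e with _ | _ | e
      · omega
      · omega
      · rw [key, key2, h2 _ (by omega), h2 _ (by omega)]; simp
    · rw [key, h3]
      rcases d with _ | d
      · rw [hc_mul_lt hX2 _ (by omega), add_zero]
      · rw [key2, h1 _ (by omega)]; simp
    · rw [show 2 * (d+1) = 2 * d + 1 + 1 by ring, key, key2, h2 _ (by omega), h4]; ring

theorem hit_gen {n d : ℕ} (h : d < n) {g : P4} (hg : g ∈ homog d) : hc n (sqTotal g) ∈ hitSub n :=
  Submodule.subset_span ⟨d, h, g, hg, rfl⟩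

theorem hit_ind (n : ℕ) (S : Submodule kk P4)
    (h : ∀ d, d < n → ∀ g ∈ homog d, hc n (sqTotal g) ∈ S) : hitSub n ≤ S := by
  refine Submodule.span_le.2 ?_
  rintro p ⟨d, hd, g, hg, rfl⟩
  exact h d hd g hg

/-- Peterson type criterion -/
theorem hit_H1 {d : ℕ} (hd : 0 < d) (he : d % 2 = 0) (i : Fin 4) {g : P4} (hg : g ∈ homog d) :
    X i * g ^ 2 ∈ hitSub (2 * d + 1) := by
  have tel : ∀ N : ℕ, ∑ j ∈ Finset.range N, sqTotal (X i ^ 2 ^ j * g) =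
      (X i + X i ^ 2 ^ N) * sqTotal g := by
    intro N
    induction N with
    | zero => simp [p4_two]
    | succ N ih =>
      have hp : sqTotal (X i ^ 2 ^ N) = X i ^ 2 ^ N + X i ^ 2 ^ (N+1) := by
        rw [map_pow, sq_X, add_pow_char_pow, ← pow_mul, pow_succ 2 N, mul_comm 2]
      rw [Finset.sum_range_succ, ih, map_mul, hp]
      have := p4_two (X i ^ 2 ^ N * sqTotal g)
      linear_combination this
  have h1 := congrArg (hc (2 * d + 1)) (tel (2 * d + 2))
  have hXp : ∀ j, (X i ^ 2 ^ j : P4) ∈ homog (2 ^ j) := fun j => isHomogeneous_X_pow i _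
  have hbig : 2 * d + 1 < 2 ^ (2 * d + 2) := by
    have := Nat.lt_two_pow_self (n := 2 * d + 2); omega
  have h2 : hc (2 * d + 1) ((X i + X i ^ 2 ^ (2 * d + 2)) * sqTotal g) = X i * g ^ 2 := by
    rw [add_mul, map_add, hc_mul_lt (hXp _) _ hbig, add_zero, add_comm, hc_mul (homog_X i),
      (sq_range d g hg).2.2.2]
  rw [h2, map_sum] at h1
  rw [← h1]
  refine Submodule.sum_mem _ fun j _ => ?_
  have hm := homog_mul (hXp j) hg
  rcases lt_trichotomy (2 ^ j + d) (2 * d + 1) with h | h | h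
  · exact hit_gen h hm
  · exfalso
    rcases j with _ | j
    · simp at h; omega
    · rw [pow_succ] at h; omega
  · rw [(sq_range _ _ hm).1 _ h]; exact Submodule.zero_mem _

theorem hit_H2 {m : ℕ} (hm : m % 2 = 1) (a b c : Fin 4) {g : P4} (hg : g ∈ hitSub m) :
    X a * X b * X c * g ^ 2 ∈ hitSub (2 * m + 3) := by
  suffices h : hitSub m ≤ (hitSub (2 * m + 3)).comap
      ((LinearMap.mulLeft kk (X a * X b * X c)).comp frob) from h hg
  apply hit_ind
  intro d hd g hg
  simp only [Submodule.mem_comap, LinearMap.comp_apply, LinearMap.mulLeft_apply, frob_apply]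
  have h1 : hc (2 * m + 3) (sqTotal (X a * X b * X c * g ^ 2)) ∈ hitSub (2 * m + 3) := by
    refine hit_gen (d := 1 + 1 + 1 + 2 * d) (by omega) ?_
    exact homog_mul (homog_mul (homog_mul (homog_X a) (homog_X b)) (homog_X c)) (homog_sq hg)
  set S := sqTotal g
  have exp : sqTotal (X a * X b * X c * g ^ 2) =
      (X a * X b * X c) * S ^ 2 + (X a ^ 2 * X b * X c) * S ^ 2 + (X a * X b ^ 2 * X c) * S ^ 2
       + (X a * X b * X c ^ 2) * S ^ 2 + (X a * X b ^ 2 * X c ^ 2) * S ^ 2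
       + (X a ^ 2 * X b * X c ^ 2) * S ^ 2 + (X a ^ 2 * X b ^ 2 * X c) * S ^ 2
       + (X a ^ 2 * X b ^ 2 * X c ^ 2) * S ^ 2 := by
    simp only [map_mul, map_pow, sq_X]; ring
  have X1 := homog_X
  have X2 : ∀ i, (X i ^ 2 : P4) ∈ homog 2 := fun i => homog_sq (homog_X i)
  have m3 : ∀ {p q r : P4} {i j k : ℕ}, p ∈ homog i → q ∈ homog j → r ∈ homog k →
    p * q * r ∈ homog (i + j + k) := fun h1 h2 h3 => homog_mul (homog_mul h1 h2) h3
  rw [exp] at h1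
  simp only [map_add] at h1
  have mm : 2 * (m - 1) + 2 = 2 * m := by omega
  rw [hc_asq (m := m) (m3 (X1 a) (X1 b) (X1 c)) S (by omega),
    hc_asq_odd (m := m) (m3 (X2 a) (X1 b) (X1 c)) S (by omega),
    hc_asq_odd (m := m) (m3 (X1 a) (X2 b) (X1 c)) S (by omega),
    hc_asq_odd (m := m) (m3 (X1 a) (X1 b) (X2 c)) S (by omega),
    hc_asq_odd (m := m - 1) (m3 (X2 a) (X2 b) (X2 c)) S (by omega),
    hc_asq (m := m - 1) (m3 (X1 a) (X2 b) (X2 c)) S (by omega),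
    hc_asq (m := m - 1) (m3 (X2 a) (X1 b) (X2 c)) S (by omega),
    hc_asq (m := m - 1) (m3 (X2 a) (X2 b) (X1 c)) S (by omega)] at h1
  have hu := hc_mem (m - 1) S
  set u := hc (m - 1) S
  have k1 : ∀ i j k : Fin 4, X i * X j ^ 2 * X k ^ 2 * u ^ 2 ∈ hitSub (2 * m + 3) := by
    intro i j k
    have := hit_H1 (d := 1 + 1 + (m - 1)) (by omega) (by omega) i
      (homog_mul (homog_mul (X1 j) (X1 k)) hu)
    rw [show 2 * (1 + 1 + (m - 1)) + 1 = 2 * m + 3 by omega] at this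
    convert this using 1; ring
  have ka := k1 a b c
  have kb := k1 b a c
  have kc := k1 c a b
  have := Submodule.sub_mem _ h1 (Submodule.add_mem _ (Submodule.add_mem _ ka kb) kc)
  convert this using 1
  ring

/-- product of all variables -/
def Xall : P4 := X 0 * X 1 * X 2 * X 3

/-- product of all variables except the `i`-th -/
def Xh (i : Fin 4) : P4 :=
  X (![1, 0, 0, 0] i) * X (![2, 2, 1, 1] i) * X (![3, 3, 3, 2] i)

theorem homog_Xh (i : Fin 4) : Xh i ∈ homog 3 :=
  homog_mul (homog_mul (homog_X _) (homog_X _)) (homog_X _)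

theorem hit_Xh {m : ℕ} (hm : m % 2 = 1) (i : Fin 4) {g : P4} (hg : g ∈ hitSub m) :
    Xh i * g ^ 2 ∈ hitSub (2 * m + 3) := hit_H2 hm _ _ _ hg

theorem homog_Xall : Xall ∈ homog 4 :=
  homog_mul (homog_mul (homog_mul (homog_X _) (homog_X _)) (homog_X _)) (homog_X _)

theorem hit_H3 {m : ℕ} {h : P4} (hh : h ∈ homog m) :
    ∑ i, Xh i * (X i * h) ^ 2 ∈ hitSub (2 * (m + 1) + 3) := by
  have h1 : hc (2 * (m + 1) + 3) (sqTotal (Xall * h ^ 2)) ∈ hitSub (2 * (m + 1) + 3) :=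
    hit_gen (d := 4 + 2 * m) (by omega) (homog_mul homog_Xall (homog_sq hh))
  set S := sqTotal h
  let T5 : P4 := ∑ i, Xh i * X i ^ 2
  let T6 : P4 := Xall * (X 0 * X 1 + X 0 * X 2 + X 0 * X 3 + X 1 * X 2 + X 1 * X 3 + X 2 * X 3)
  let T7 : P4 := Xall * (X 0 * X 1 * X 2 + X 0 * X 1 * X 3 + X 0 * X 2 * X 3 + X 1 * X 2 * X 3)
  have t5 : T5 ∈ homog 5 :=
    Submodule.sum_mem _ fun i _ => homog_mul (homog_Xh i) (homog_sq (homog_X i))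
  have q2 : ∀ i j : Fin 4, (X i * X j : P4) ∈ homog 2 := fun i j =>
    homog_mul (homog_X i) (homog_X j)
  have q3 : ∀ i j k : Fin 4, (X i * X j * X k : P4) ∈ homog 3 := fun i j k =>
    homog_mul (q2 i j) (homog_X k)
  have t6 : T6 ∈ homog 6 := by
    refine homog_mul (n := 2) homog_Xall ?_
    repeat' first | exact q2 _ _ | apply Submodule.add_mem
  have t7 : T7 ∈ homog 7 := by
    refine homog_mul (n := 3) homog_Xall ?_
    repeat' first | exact q3 _ _ _ | apply Submodule.add_mem
  have t8 : Xall ^ 2 ∈ homog 8 := homog_sq homog_Xall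
  have exp : sqTotal (Xall * h ^ 2) =
      Xall * S ^ 2 + T5 * S ^ 2 + T6 * S ^ 2 + T7 * S ^ 2 + Xall ^ 2 * S ^ 2 := by
    simp only [T5, T6, T7, Fin.sum_univ_four, Xh, Xall, map_mul, map_pow, sq_X]
    simp
    ring
  rw [exp] at h1
  simp only [map_add] at h1
  rw [hc_asq_odd (m := m + 1) homog_Xall S (by omega), hc_asq (m := m) t5 S (by omega),
    hc_asq_odd (m := m) t6 S (by omega)] at h1
  have h8 : hc (2 * (m + 1) + 3) (Xall ^ 2 * S ^ 2) = 0 := by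
    rcases m with _ | m
    · exact hc_mul_lt t8 _ (by omega)
    · exact hc_asq_odd (m := m) t8 S (by omega)
  have : hc (2 * (m + 1) + 3) (T7 * S ^ 2) = 0 := by
    rcases m with _ | m
    · exact hc_mul_lt t7 _ (by omega)
    · rw [hc_asq (m := m) t7 S (by omega), (sq_range _ _ hh).1 _ (by omega)]; simp
  rw [this, h8, (sq_range _ _ hh).2.2.1] at h1
  convert h1 using 1
  simp only [T5, zero_add, add_zero, Finset.sum_mul]
  exact Finset.sum_congr rfl fun i _ => by ring

def nn : ℕ → ℕ
  | 0 => 3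
  | s + 1 => 2 * nn s + 3

theorem nn_odd (s : ℕ) : nn s % 2 = 1 := by
  cases s with
  | zero => rfl
  | succ s => simp only [nn]; omega

theorem nn_ge (s : ℕ) : 3 ≤ nn s := by
  cases s with
  | zero => simp [nn]
  | succ s => simp only [nn]; omega

theorem nn_eq (s : ℕ) : nn s = 3 * (2 ^ s - 1) + 3 * 2 ^ s := by
  have h : ∀ s, nn s + 3 = 6 * 2 ^ s := by
    intro s
    induction s with
    | zero => rfl
    | succ s ih => simp only [nn, pow_succ]; omega
  have := h s
  have := Nat.one_le_two_pow (n := s)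
  omega

def mon (v : Finset (Fin 4)) : P4 := ∏ i ∈ v, X i

theorem Xh_eq (i : Fin 4) : Xh i = mon {i}ᶜ := by
  have : ∀ i : Fin 4, ({i}ᶜ : Finset (Fin 4)) =
    {![1, 0, 0, 0] i, ![2, 2, 1, 1] i, ![3, 3, 3, 2] i} := by decide
  have h2 : ∀ i : Fin 4, (![1, 0, 0, 0] i : Fin 4) ∉ ({![2, 2, 1, 1] i, ![3, 3, 3, 2] i} :
    Finset (Fin 4)) ∧ ((![2, 2, 1, 1] i : Fin 4) ∉ ({![3, 3, 3, 2] i} : Finset (Fin 4))) := by decide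
  rw [mon, this, Finset.prod_insert (h2 i).1, Finset.prod_insert (h2 i).2, Finset.prod_singleton,
    Xh, mul_assoc]

theorem X_Xh (i : Fin 4) : X i * Xh i = Xall := by
  fin_cases i <;> simp [Xh, Xall] <;> ring

theorem comp_pair (i l : Fin 4) (h : i ≠ l) : ∃ j k : Fin 4,
    X i * (X j * X k) = Xh l ∧ X l * (X j * X k) = Xh i ∧
    ∀ f : Fin 4 → P4, ∑ a, f a = f i + f l + f j + f k := by
  have : ∀ i l : Fin 4, i ≠ l → ∃ j k : Fin 4, ({l}ᶜ : Finset (Fin 4)) = {i, j, k} ∧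
    ({i}ᶜ : Finset (Fin 4)) = {l, j, k} ∧ (Finset.univ : Finset (Fin 4)) = {i, l, j, k} ∧
    i ∉ ({l, j, k} : Finset (Fin 4)) ∧ l ∉ ({j, k} : Finset (Fin 4)) ∧
    j ∉ ({k} : Finset (Fin 4)) ∧ i ∉ ({j, k} : Finset (Fin 4)) := by decide
  obtain ⟨j, k, h1, h2, h3, h4, h5, h6, h7⟩ := this i l h
  refine ⟨j, k, ?_, ?_, ?_⟩
  · rw [Xh_eq, mon, h1, Finset.prod_insert h7, Finset.prod_insert h6, Finset.prod_singleton]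
  · rw [Xh_eq, mon, h2, Finset.prod_insert h5, Finset.prod_insert h6, Finset.prod_singleton]
  · intro f
    rw [h3, Finset.sum_insert h4, Finset.sum_insert h5, Finset.sum_insert h6, Finset.sum_singleton]
    ring

theorem hit_step {s : ℕ} (i : Fin 4) {g : P4} (hg : g ∈ hitSub (nn s)) :
    Xh i * g ^ 2 ∈ hitSub (nn (s + 1)) := hit_Xh (nn_odd s) i hg

theorem hit_one {s : ℕ} (i : Fin 4) {g : P4} (hg : g ∈ homog (nn s + 1)) :
    X i * g ^ 2 ∈ hitSub (nn (s + 1)) := by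
  have := hit_H1 (by omega) (by have := nn_odd s; omega) i hg
  rwa [show 2 * (nn s + 1) + 1 = nn (s + 1) by simp only [nn]; ring] at this

theorem hit_three {s m : ℕ} (hm : m + 1 = nn s) {h : P4} (hh : h ∈ homog m) :
    ∑ i, Xh i * (X i * h) ^ 2 ∈ hitSub (nn (s + 1)) := by
  have := hit_H3 hh
  rwa [hm] at this

theorem hit_swap {s : ℕ} (i l : Fin 4) {g : P4} (hg : g ∈ homog (nn s)) :
    Xh i * (Xh l * g ^ 2) ^ 2 - Xh l * (Xh i * g ^ 2) ^ 2 ∈ hitSub (nn (s + 2)) := by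
  by_cases hil : i = l
  · subst hil; simp
  obtain ⟨j, k, h1, h2, h3⟩ := comp_pair i l hil
  have hh : X j * X k * g ^ 2 ∈ homog (1 + 1 + 2 * nn s) :=
    homog_mul (homog_mul (homog_X j) (homog_X k)) (homog_sq hg)
  have key := hit_three (s := s + 1) (by simp only [nn]; ring) hh
  have e : ∀ a, Xh a * (X a * (X j * X k * g ^ 2)) ^ 2 =
      Xh a * (X a * (X j * X k) * g ^ 2) ^ 2 := by intro a; ring
  rw [h3, e, e, e, e, h1, h2] at key
  have hz : ∀ j k, Xh j * (X k * (X j * g) ^ 2) ^ 2 ∈ hitSub (nn (s + 2)) := fun j k =>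
    hit_step j (hit_one k (homog_cast (homog_mul (homog_X j) hg) (by ring)))
  have := Submodule.sub_mem _ (Submodule.sub_mem _ key (hz j k)) (hz k j)
  convert this using 1
  linear_combination (-1 : P4) * p4_two (Xh l * (Xh i * g ^ 2) ^ 2)

theorem X_Xall (i : Fin 4) : X i * Xall = Xh i * X i ^ 2 := by
  rw [← X_Xh i]; ring

theorem hit_double {s : ℕ} (i l : Fin 4) {g : P4} (hg : g ∈ homog (nn s)) :
    Xh i * (Xh i * (Xh l * g ^ 2) ^ 2) ^ 2 - Xh l * (Xh l * (Xh i * g ^ 2) ^ 2) ^ 2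
      ∈ hitSub (nn (s + 3)) := by
  by_cases hil : i = l
  · subst hil; simp
  obtain ⟨j, k, h1, h2, h3⟩ := comp_pair i l hil
  have hh : Xall * (X j * X k * g ^ 2) ^ 2 ∈ homog (4 + 2 * (1 + 1 + 2 * nn s)) :=
    homog_mul homog_Xall (homog_sq (homog_mul (homog_mul (homog_X j) (homog_X k)) (homog_sq hg)))
  have key := hit_three (s := s + 2) (by simp only [nn]; ring) hh
  have e : ∀ a, Xh a * (X a * (Xall * (X j * X k * g ^ 2) ^ 2)) ^ 2 =
      Xh a * (Xh a * (X a * (X j * X k) * g ^ 2) ^ 2) ^ 2 := by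
    intro a
    rw [← mul_assoc (X a), X_Xall]; ring
  rw [h3, e, e, e, e, h1, h2] at key
  have hz : ∀ j k, Xh j * (Xh j * (X k * (X j * g) ^ 2) ^ 2) ^ 2 ∈ hitSub (nn (s + 3)) :=
    fun j k => hit_step j (hit_step j
      (hit_one k (homog_cast (homog_mul (homog_X j) hg) (by ring))))
  have := Submodule.sub_mem _ (Submodule.sub_mem _ key (hz j k)) (hz k j)
  convert this using 1
  linear_combination (-1 : P4) * p4_two (Xh l * (Xh l * (Xh i * g ^ 2) ^ 2) ^ 2)

def mono (J : List (Fin 4)) : P4 := (J.map X).prod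

theorem mono_cons (i : Fin 4) (J : List (Fin 4)) : mono (i :: J) = X i * mono J := by
  simp [mono]

theorem homog_mono (J : List (Fin 4)) : mono J ∈ homog J.length := by
  induction J with
  | nil => simp [mono]; exact isHomogeneous_one _ _
  | cons i J ih =>
    rw [mono_cons, List.length_cons, add_comm]
    exact homog_mul (homog_X i) ih

def EW : List (Fin 4) → P4 → P4
  | [], q => q
  | i :: w, q => Xh i * (EW w q) ^ 2

theorem homog_EW (w : List (Fin 4)) {q : P4} (hq : q ∈ homog 3) :
    EW w q ∈ homog (nn w.length) := by
  induction w with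
  | nil => exact hq
  | cons i w ih =>
    exact homog_cast (homog_mul (homog_Xh i) (homog_sq ih)) (by simp only [List.length_cons, nn]; ring)

theorem EW_add (w : List (Fin 4)) (q r : P4) : EW w (q + r) = EW w q + EW w r := by
  induction w with
  | nil => rfl
  | cons i w ih => simp only [EW, ih, p4_add_sq]; ring

theorem p4_sub_sq (f g : P4) : (f - g) ^ 2 = f ^ 2 - g ^ 2 := by
  rw [CharTwo.sub_eq_add, CharTwo.sub_eq_add, p4_add_sq]

theorem EW_hit (w : List (Fin 4)) {q : P4} (hq : q ∈ hitSub 3) :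
    EW w q ∈ hitSub (nn w.length) := by
  induction w with
  | nil => exact hq
  | cons i w ih => exact hit_step i ih

/-- congruence modulo hit polynomials -/
def Hq (s : ℕ) (f g : P4) : Prop := f - g ∈ hitSub (nn s)

theorem Hq.rfl' {s f} : Hq s f f := by simp [Hq]
theorem Hq.symm' {s f g} (h : Hq s f g) : Hq s g f := by
  have := Submodule.neg_mem _ h
  rwa [neg_sub] at this
theorem Hq.trans' {s f g k} (h : Hq s f g) (h' : Hq s g k) : Hq s f k := by
  have := Submodule.add_mem _ h h'
  rwa [sub_add_sub_cancel] at this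

theorem Hq.step {s f g} (i : Fin 4) (h : Hq s f g) : Hq (s + 1) (Xh i * f ^ 2) (Xh i * g ^ 2) := by
  have := hit_step i h
  rw [p4_sub_sq, mul_sub] at this
  exact this

theorem EW_perm {w v : List (Fin 4)} (h : w.Perm v) {q : P4} (hq : q ∈ homog 3) :
    Hq w.length (EW w q) (EW v q) := by
  induction h with
  | nil => exact Hq.rfl'
  | cons a _ ih => exact ih.step a
  | swap a b l => exact hit_swap b a (homog_EW l hq)
  | trans h1 h2 ih1 ih2 =>
    rw [← h1.length_eq] at ih2
    exact ih1.trans' ih2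

theorem EW_same_aux {q : P4} (hq : q ∈ homog 3) (a : Fin 4) (w v : List (Fin 4))
    (hl : w.length = v.length)
    (hs : (a :: w).toFinset = (a :: v).toFinset) (haw : a ∈ w) (hav : a ∉ v)
    (ih : ∀ w v : List (Fin 4), w.length = v.length → v.length = l →
      w.toFinset = v.toFinset → Hq w.length (EW w q) (EW v q))
    (hvl : v.length = l) :
    Hq (l + 1) (EW (a :: w) q) (EW (a :: v) q) := by
  have hw : w.toFinset = insert a v.toFinset := by
    rw [List.toFinset_cons, List.toFinset_cons, Finset.insert_eq_self.2 (by simpa using haw)] at hs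
    exact hs
  have hnd : ¬ v.Nodup := by
    intro hnd
    have h1 := List.toFinset_card_of_nodup hnd
    have h2 := List.toFinset_card_le w
    rw [hw, Finset.card_insert_of_notMem (by simpa using hav)] at h2
    omega
  obtain ⟨b, hb⟩ : ∃ b, [b, b].Sublist v := by
    by_contra hc
    push Not at hc
    exact hnd (List.nodup_iff_sublist.2 hc)
  obtain ⟨u, hu⟩ := hb.exists_perm_append
  simp only [List.cons_append, List.nil_append] at hu
  have hul := hu.length_eq
  simp only [List.length_cons] at hul
  have p1 : (a :: v).Perm (b :: b :: a :: u) := by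
    refine (hu.cons a).trans ?_
    exact (List.Perm.swap b a _).trans ((List.Perm.swap b a _).cons b)
  have e1 := EW_perm p1 hq
  have e2 : Hq (u.length + 3) (EW (b :: b :: a :: u) q) (EW (a :: a :: b :: u) q) :=
    hit_double b a (homog_EW u hq)
  have e3 := ih w (a :: b :: u) (by simp; omega) (by simp; omega) (by
    rw [hw, List.toFinset_eq_of_perm _ _ hu]; simp)
  have e4 := e3.step a
  simp only [List.length_cons] at e1
  rw [show l + 1 = w.length + 1 by omega]
  refine e4.trans' ?_
  rw [show w.length + 1 = v.length + 1 by omega]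
  refine Hq.symm' (e1.trans' ?_)
  rw [show v.length + 1 = u.length + 3 by omega]
  exact e2

theorem EW_same {q : P4} (hq : q ∈ homog 3) (l : ℕ) : ∀ w v : List (Fin 4),
    w.length = v.length → v.length = l →
      w.toFinset = v.toFinset → Hq w.length (EW w q) (EW v q) := by
  induction l with
  | zero =>
    intro w v h1 h2 _
    rw [List.length_eq_zero_iff] at h2
    subst h2
    rw [List.length_nil, List.length_eq_zero_iff] at h1
    subst h1
    exact Hq.rfl'
  | succ l ih =>
    intro w v h1 h2 hs
    rcases w with _ | ⟨a, w⟩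
    · simp at h1; omega
    have hav : a ∈ v := by
      have : a ∈ (a :: w).toFinset := by simp
      rw [hs] at this; simpa using this
    have hp := List.perm_cons_erase hav
    set v' := v.erase a
    have hl' := hp.length_eq
    simp only [List.length_cons] at h1 hl' ⊢
    have e1 := EW_perm hp hq
    rw [h1]
    refine Hq.trans' ?_ e1.symm'
    rw [List.toFinset_eq_of_perm _ _ hp] at hs
    have hwl : w.length = v'.length := by omega
    have hvl : v'.length = l := by omega
    by_cases c1 : a ∈ w <;> by_cases c2 : a ∈ v'
    · rw [List.toFinset_cons, List.toFinset_cons, Finset.insert_eq_self.2 (by simpa using c1),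
        Finset.insert_eq_self.2 (by simpa using c2)] at hs
      have := (ih w v' hwl hvl hs).step a
      rw [show v.length = w.length + 1 by omega]
      exact this
    · have := EW_same_aux hq a w v' hwl hs c1 c2 ih hvl
      rw [show v.length = l + 1 by omega]
      exact this
    · have := EW_same_aux hq a v' w hwl.symm hs.symm c2 c1 ih (by omega)
      rw [show v.length = l + 1 by omega]
      exact this.symm'
    · have hs2 : w.toFinset = v'.toFinset := by
        have h3 : a ∉ w.toFinset := by simpa using c1
        have h4 : a ∉ v'.toFinset := by simpa using c2
        rw [List.toFinset_cons, List.toFinset_cons] at hs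
        rw [← Finset.erase_insert h3, hs, Finset.erase_insert h4]
      have := (ih w v' hwl hvl hs2).step a
      rw [show v.length = w.length + 1 by omega]
      exact this

theorem hit3 (i j : Fin 4) : X i ^ 2 * X j + X i * X j ^ 2 ∈ hitSub 3 := by
  have h1 : (X i * X j : P4) ∈ homog 2 := homog_mul (homog_X i) (homog_X j)
  have h := hit_gen (n := 3) (by omega) h1
  have e : sqTotal (X i * X j) = X i * X j + X i ^ 2 * X j + X i * X j ^ 2 + (X i * X j) ^ 2 := by
    rw [map_mul, sq_X, sq_X]; ring
  rw [e] at h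
  have h2 : (X i ^ 2 * X j : P4) ∈ homog 3 := homog_mul (homog_sq (homog_X i)) (homog_X j)
  have h3 : (X i * X j ^ 2 : P4) ∈ homog 3 := homog_mul (homog_X i) (homog_sq (homog_X j))
  have h4 := homog_sq h1
  simp only [map_add] at h
  rw [hc_of h1, hc_of h2, hc_of h3, hc_of h4] at h
  simpa using h

theorem mono_same (J K : List (Fin 4)) (hJ : J.length = 3) (hK : K.length = 3)
    (h : J.toFinset = K.toFinset) : mono J - mono K ∈ hitSub 3 := by
  have key : ∀ a b c d e f : Fin 4, [a, b, c].toFinset = [d, e, f].toFinset →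
    [a, b, c].Perm [d, e, f] ∨ ∃ x y, [a, b, c].Perm [x, x, y] ∧ [d, e, f].Perm [y, y, x] := by
    decide +kernel
  obtain ⟨a, b, c, rfl⟩ := List.length_eq_three.1 hJ
  obtain ⟨d, e, f, rfl⟩ := List.length_eq_three.1 hK
  have mp : ∀ {J K : List (Fin 4)}, J.Perm K → mono J = mono K := fun h => (h.map X).prod_eq
  rcases key a b c d e f h with h | ⟨x, y, h1, h2⟩
  · rw [mp h]; simp
  · rw [mp h1, mp h2]
    have := hit3 x y
    convert this using 1
    rw [CharTwo.sub_eq_add]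
    simp [mono]; ring

theorem EW_sub (w : List (Fin 4)) (q r : P4) : EW w (q - r) = EW w q - EW w r := by
  rw [CharTwo.sub_eq_add, EW_add, CharTwo.sub_eq_add]

theorem EW_all (w v J K : List (Fin 4)) (h1 : w.length = v.length) (h2 : w.toFinset = v.toFinset)
    (hJ : J.length = 3) (hK : K.length = 3)
    (h : J.toFinset = K.toFinset) : Hq w.length (EW w (mono J)) (EW v (mono K)) := by
  have e1 := EW_same (q := mono J) (homog_cast (homog_mono J) hJ) _ w v h1 rfl h2
  refine e1.trans' ?_
  have := EW_hit v (mono_same J K hJ hK h)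
  rw [EW_sub] at this
  rw [h1]; exact this

theorem EW_sum (w : List (Fin 4)) (q : Fin 4 → P4) : EW w (∑ i, q i) = ∑ i, EW w (q i) := by
  simp only [Fin.sum_univ_four, EW_add]

/-- first family of relations -/
theorem rel_rep (s : ℕ) {q : P4} (hq : q ∈ homog 2) :
    ∑ i, EW (List.replicate (s + 1) i) (X i * q) ∈ hitSub (nn (s + 1)) := by
  have : ∀ s : ℕ, ∃ h : P4, h ∈ homog (nn s - 1) ∧
      ∀ i, X i * h = EW (List.replicate s i) (X i * q) := by
    intro s
    induction s with
    | zero => exact ⟨q, hq, fun i => rfl⟩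
    | succ s ih =>
      obtain ⟨h, h1, h2⟩ := ih
      refine ⟨Xall * h ^ 2, homog_cast (homog_mul homog_Xall (homog_sq h1)) ?_, ?_⟩
      · have := nn_ge s
        simp only [nn]; omega
      · intro i
        rw [List.replicate_succ, EW, ← h2, ← mul_assoc, X_Xall]; ring
  obtain ⟨h, h1, h2⟩ := this s
  have := hit_three (s := s) (by have := nn_ge s; omega) h1
  simp only [h2] at this
  exact this

/-- second family of relations -/
theorem rel_word (w : List (Fin 4)) {q : P4} (hq : q ∈ homog 2) :
    ∑ i, EW (i :: w) (X i * q) ∈ hitSub (nn (w.length + 1)) := by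
  induction w with
  | nil => exact rel_rep 0 hq
  | cons a w ih =>
    have h1 : ∀ i, EW (i :: a :: w) (X i * q) - EW (a :: i :: w) (X i * q) ∈
        hitSub (nn (w.length + 2)) := fun i =>
      hit_swap i a (homog_EW w (homog_mul (homog_X i) hq))
    have h2 : ∑ i, EW (a :: i :: w) (X i * q) ∈ hitSub (nn (w.length + 2)) := by
      have := hit_step a ih
      convert this using 1
      simp only [Fin.sum_univ_four, p4_add_sq]
      simp only [EW]
      ring
    have h3 := Submodule.add_mem _ (Submodule.sum_mem _ fun i (_ : i ∈ Finset.univ) => h1 i) h2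
    rw [← Finset.sum_add_distrib] at h3
    simpa using h3

def half (m : Fin 4 →₀ ℕ) : Fin 4 →₀ ℕ := Finsupp.equivFunOnFinite.symm fun i => m i / 2

def par (m : Fin 4 →₀ ℕ) : Finset (Fin 4) := Finset.univ.filter fun i => m i % 2 = 1

theorem mono_par (m : Fin 4 →₀ ℕ) :
    monomial m (1 : kk) = mon (par m) * (monomial (half m) 1) ^ 2 := by
  have h : ∀ m : Fin 4 →₀ ℕ, (monomial m (1 : kk) : P4) = ∏ i, X i ^ m i := by
    intro m
    rw [monomial_eq, Finsupp.prod_fintype _ _ (by simp)]; simp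
  rw [h, h, mon, par, Finset.prod_filter, ← Finset.prod_pow, ← Finset.prod_mul_distrib]
  refine Finset.prod_congr rfl fun i _ => ?_
  simp only [half, Finsupp.equivFunOnFinite_symm_apply_apply]
  rw [← pow_mul]
  split_ifs with h
  · rw [← pow_succ']; congr 1; omega
  · rw [one_mul]; congr 1; omega

theorem degree_par (m : Fin 4 →₀ ℕ) : m.degree = (par m).card + 2 * (half m).degree := by
  rw [Finsupp.degree_eq_sum, Finsupp.degree_eq_sum, par, Finset.card_filter, Finset.mul_sum,
    ← Finset.sum_add_distrib]
  refine Finset.sum_congr rfl fun i _ => ?_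
  simp only [half, Finsupp.equivFunOnFinite_symm_apply_apply]
  split_ifs <;> omega

theorem par_odd (v : Finset (Fin 4)) (h : v.card % 2 = 1) : (∃ i, v = {i}) ∨ ∃ i, v = {i}ᶜ := by
  revert v; decide

def wordSet (s : ℕ) : Set P4 :=
  {f | ∃ w J : List (Fin 4), w.length = s ∧ J.length = 3 ∧ f = EW w (mono J)}

theorem homog_mon (m : Fin 4 →₀ ℕ) : (monomial m (1 : kk) : P4) ∈ homog m.degree :=
  isHomogeneous_monomial _ rfl

theorem span_words (s : ℕ) : homog (nn s) ≤ Submodule.span kk (wordSet s) ⊔ hitSub (nn s) := by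
  induction s with
  | zero =>
    apply homog_ind
    intro m hm
    obtain ⟨i, m1, h1, e1⟩ := mono_split m 2 hm
    obtain ⟨j, m2, h2, e2⟩ := mono_split m1 1 h1
    obtain ⟨k, m3, h3, e3⟩ := mono_split m2 0 h2
    have : m3 = 0 := (Finsupp.degree_eq_zero_iff m3).1 h3
    subst this
    refine Submodule.mem_sup_left (Submodule.subset_span ⟨[], [i, j, k], rfl, rfl, ?_⟩)
    rw [e1, e2, e3]
    simp [EW, mono]
  | succ s ih =>
    apply homog_ind
    intro m hm
    rw [mono_par]
    have hd := degree_par m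
    rw [hm] at hd
    simp only [nn] at hd
    have hg := homog_mon (half m)
    rcases par_odd (par m) (by omega) with ⟨i, hi⟩ | ⟨i, hi⟩
    · rw [hi] at hd ⊢
      rw [mon, Finset.prod_singleton]
      rw [Finset.card_singleton] at hd
      exact Submodule.mem_sup_right (hit_one i (homog_cast hg (by omega)))
    · rw [hi] at hd ⊢
      rw [← Xh_eq]
      rw [Finset.card_compl, Finset.card_singleton, Fintype.card_fin] at hd
      have h1 := ih (homog_cast hg (show _ = nn s by omega))
      have h2 : Submodule.span kk (wordSet s) ⊔ hitSub (nn s) ≤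
          (Submodule.span kk (wordSet (s+1)) ⊔ hitSub (nn (s+1))).comap
            ((LinearMap.mulLeft kk (Xh i)).comp frob) := by
        refine sup_le (Submodule.span_le.2 ?_) ?_
        · rintro f ⟨w, J, h3, h4, rfl⟩
          refine Submodule.mem_sup_left (Submodule.subset_span ⟨i :: w, J, by simp [h3], h4, rfl⟩)
        · intro f hf
          exact Submodule.mem_sup_right (hit_step i hf)
      exact h2 h1

def kap (v : Finset (Fin 4)) : P4 →ₗ[kk] P4 :=
  (basisMonomials (Fin 4) kk).constr kk fun m => if par m = v then monomial (half m) 1 else 0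

theorem kap_monomial (v : Finset (Fin 4)) (m : Fin 4 →₀ ℕ) :
    kap v (monomial m 1) = if par m = v then monomial (half m) 1 else 0 := by
  have := (basisMonomials (Fin 4) kk).constr_basis kk
    (fun m => if par m = v then (monomial (half m) 1 : P4) else 0) m
  rw [coe_basisMonomials] at this
  exact this

theorem ind_mon (S : Submodule kk P4) (h : ∀ u g, mon u * g ^ 2 ∈ S) (f : P4) : f ∈ S := by
  apply all_ind
  intro m
  rw [mono_par]
  exact h _ _

theorem ind_eq {V : Type*} [AddCommGroup V] [Module kk V] (L L' : P4 →ₗ[kk] V)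
    (h : ∀ u g, L (mon u * g ^ 2) = L' (mon u * g ^ 2)) (f : P4) : L f = L' f :=
  ind_mon (LinearMap.eqLocus L L') h f

theorem all_eq {V : Type*} [AddCommGroup V] [Module kk V] (L L' : P4 →ₗ[kk] V)
    (h : ∀ m, L (monomial m 1) = L' (monomial m 1)) (f : P4) : L f = L' f :=
  all_ind (LinearMap.eqLocus L L') h f

theorem kap_mon_sq (v u : Finset (Fin 4)) (g : P4) :
    kap v (mon u * g ^ 2) = if u = v then g else 0 := by
  have key : ∀ f, ((kap v).comp ((LinearMap.mulLeft kk (mon u)).comp frob)) f =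
      (if u = v then LinearMap.id else 0 : P4 →ₗ[kk] P4) f := by
    apply all_eq
    intro m
    simp only [LinearMap.comp_apply, LinearMap.mulLeft_apply, frob_apply]
    have h1 : par (Finsupp.equivFunOnFinite.symm fun i => (if i ∈ u then 1 else 0) + 2 * m i) = u := by
      ext i
      simp only [par, Finset.mem_filter, Finset.mem_univ, true_and,
          Finsupp.equivFunOnFinite_symm_apply_apply]
      split_ifs with h
      · simp [h]
      · simp [h]
    have h2 : half (Finsupp.equivFunOnFinite.symm fun i => (if i ∈ u then 1 else 0) + 2 * m i) = m := by
      ext i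
      simp only [half, Finsupp.equivFunOnFinite_symm_apply_apply]
      split_ifs <;> omega
    have e : mon u * (monomial m (1 : kk)) ^ 2 =
        monomial (Finsupp.equivFunOnFinite.symm fun i => (if i ∈ u then 1 else 0) + 2 * m i) 1 := by
      rw [mono_par (Finsupp.equivFunOnFinite.symm _), h1, h2]
    rw [e, kap_monomial]
    rw [h1, h2]
    split_ifs <;> simp
  have := key g
  simp only [LinearMap.comp_apply, LinearMap.mulLeft_apply, frob_apply] at this
  rw [this]
  split_ifs <;> simp

theorem kap_mul_sq (v : Finset (Fin 4)) (f g : P4) : kap v (f * g ^ 2) = kap v f * g := by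
  have key := ind_eq ((kap v).comp (LinearMap.mulRight kk (g ^ 2)))
    ((LinearMap.mulRight kk g).comp (kap v))
  simp only [LinearMap.comp_apply, LinearMap.mulRight_apply] at key
  refine key ?_ f
  intro u h
  rw [mul_assoc, ← mul_pow, kap_mon_sq, kap_mon_sq]
  split_ifs <;> simp

theorem kap_mon (v u : Finset (Fin 4)) : kap v (mon u) = if u = v then 1 else 0 := by
  have := kap_mon_sq v u 1
  rwa [one_pow, mul_one] at this

theorem kap_sq_mon (v u : Finset (Fin 4)) :
    kap v (sqTotal (mon u)) = if v ⊆ u then mon (u \ v) else 0 := by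
  have e : sqTotal (mon u) = ∑ T ∈ u.powerset, mon T * (mon (u \ T)) ^ 2 := by
    rw [mon, map_prod]
    simp only [sq_X]
    rw [Finset.prod_add]
    refine Finset.sum_congr rfl fun T _ => ?_
    rw [mon, mon, Finset.prod_pow]
  rw [e, map_sum]
  simp only [kap_mon_sq]
  rw [Finset.sum_ite_eq']
  simp

abbrev kp (i : Fin 4) : P4 →ₗ[kk] P4 := kap {i}ᶜ

theorem mon_single (i : Fin 4) : mon {i} = X i := by simp [mon]

theorem kp_sq (i : Fin 4) (g : P4) :
    kp i (sqTotal g) = sqTotal (kp i g) + X i * sqTotal (kap Finset.univ g) := by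
  have key := ind_eq ((kp i).comp sqTotal.toLinearMap) (sqTotal.toLinearMap.comp (kp i) +
    (LinearMap.mulLeft kk (X i)).comp (sqTotal.toLinearMap.comp (kap Finset.univ)))
  simp only [LinearMap.comp_apply, LinearMap.add_apply, LinearMap.mulLeft_apply,
    AlgHom.toLinearMap_apply] at key
  refine key ?_ g
  intro u h
  rw [map_mul, map_pow, kap_mul_sq, kap_sq_mon, kap_mon_sq, kap_mon_sq]
  have h0 : ∀ (u : Finset (Fin 4)) (i : Fin 4), ({i}ᶜ ⊆ u ↔ u = {i}ᶜ ∨ u = Finset.univ) := by decide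
  have h1 : ∀ i : Fin 4, ({i}ᶜ : Finset (Fin 4)) ≠ Finset.univ := by decide
  have h2 : ∀ i : Fin 4, (Finset.univ \ {i}ᶜ : Finset (Fin 4)) = {i} := by decide
  by_cases c1 : u = {i}ᶜ
  · subst c1
    simp [h1 i, mon]
  · by_cases c2 : u = Finset.univ
    · subst c2
      simp only [h0, or_true, if_true, h2, mon_single, if_neg (h1 i).symm]
      simp
    · simp [h0, c1, c2]

theorem kp_hc (i : Fin 4) (m : ℕ) (f : P4) : kp i (hc (2 * m + 3) f) = hc m (kp i f) := by
  have key := all_eq ((kp i).comp (hc (2 * m + 3))) ((hc m).comp (kp i))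
  simp only [LinearMap.comp_apply] at key
  refine key ?_ f
  intro k
  rw [hc_of (homog_mon k)]
  have hd := degree_par k
  rw [kap_monomial]
  split_ifs with h1 h2 h2
  · rw [h2, Finset.card_compl, Finset.card_singleton, Fintype.card_fin] at hd
    rw [kap_monomial, if_pos h2, hc_of (homog_mon _), if_pos (by omega)]
  · rw [kap_monomial, if_neg h2, map_zero]
  · rw [h2, Finset.card_compl, Finset.card_singleton, Fintype.card_fin] at hd
    rw [hc_of (homog_mon _), if_neg (by omega), map_zero]
  · simp

theorem kp_zero (i : Fin 4) (d : ℕ) (h : ∀ k, d ≠ 2 * k + 3) {g : P4} (hg : g ∈ homog d) :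
    kp i g = 0 := by
  have : homog d ≤ LinearMap.ker (kp i) := by
    apply homog_ind
    intro m hm
    rw [LinearMap.mem_ker, kap_monomial]
    split_ifs with h2
    · have hd := degree_par m
      rw [h2, Finset.card_compl, Finset.card_singleton, Fintype.card_fin] at hd
      exact absurd (by omega) (h (half m).degree)
    · rfl
  exact this hg

/-- the transfer lemma for functionals -/
theorem kill_step {m : ℕ} (φ : Fin 4 → P4 →ₗ[kk] kk)
    (h1 : ∀ i, hitSub (m + 1) ≤ LinearMap.ker (φ i))
    (h2 : ∀ h ∈ homog m, ∑ i, φ i (X i * h) = 0) :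
    hitSub (2 * (m + 1) + 3) ≤ LinearMap.ker (∑ i, (φ i).comp (kp i)) := by
  refine Submodule.span_le.2 ?_
  rintro _ ⟨d, hd, g, hg, rfl⟩
  show (∑ i, (φ i).comp (kp i)) (hc (2 * (m + 1) + 3) (sqTotal g)) = 0
  simp only [LinearMap.sum_apply, LinearMap.comp_apply, kp_hc, kp_sq, map_add,
    Finset.sum_add_distrib]
  have e1 : ∀ i, φ i (hc (m + 1) (sqTotal (kp i g))) = 0 := by
    intro i
    by_cases c : ∃ k, d = 2 * k + 3
    · obtain ⟨k, rfl⟩ := c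
      have : kp i g ∈ homog k := by
        rw [← hc_self hg, kp_hc]; exact hc_mem _ _
      exact h1 i (hit_gen (by omega) this)
    · push Not at c
      rw [kp_zero i d c hg]; simp
  have e2 : ∀ i, hc (m + 1) (X i * sqTotal (kap Finset.univ g)) =
      X i * hc m (sqTotal (kap Finset.univ g)) := by
    intro i
    rw [add_comm m 1]
    exact hc_mul (homog_X i) _
  simp only [e1, e2, Finset.sum_const_zero, zero_add]
  exact h2 _ (hc_mem _ _)

theorem kap_X (v : Finset (Fin 4)) (i : Fin 4) (h : P4) :
    kap v (X i * h) = if i ∈ v then kap (v.erase i) h else X i * kap (insert i v) h := by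
  refine (ind_eq ((kap v).comp (LinearMap.mulLeft kk (X i)))
    (if i ∈ v then kap (v.erase i) else (LinearMap.mulLeft kk (X i)).comp (kap (insert i v)))
    ?_ h).trans (by split_ifs <;> rfl)
  intro u g
  simp only [LinearMap.comp_apply, LinearMap.mulLeft_apply]
  by_cases c : i ∈ u
  · have e : X i * (mon u * g ^ 2) = mon (u.erase i) * (X i * g) ^ 2 := by
      rw [mon, ← Finset.mul_prod_erase u _ c, mon]; ring
    rw [e, kap_mon_sq]
    by_cases c2 : i ∈ v
    · rw [if_pos c2, if_neg (by rintro rfl; simp at c2), kap_mon_sq, if_neg (by rintro rfl; simp at c)]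
    · rw [if_neg c2, LinearMap.comp_apply, kap_mon_sq]
      have : u.erase i = v ↔ u = insert i v := by
        constructor
        · rintro rfl; rw [Finset.insert_erase c]
        · rintro rfl; rw [Finset.erase_insert c2]
      simp only [this, LinearMap.mulLeft_apply]
      split_ifs <;> simp
  · have e : X i * (mon u * g ^ 2) = mon (insert i u) * g ^ 2 := by
      rw [mon, mon, Finset.prod_insert c]; ring
    rw [e, kap_mon_sq]
    by_cases c2 : i ∈ v
    · rw [if_pos c2, kap_mon_sq]
      have : insert i u = v ↔ u = v.erase i := by
        constructor
        · rintro rfl; rw [Finset.erase_insert c]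
        · rintro rfl; rw [Finset.insert_erase c2]
      simp only [this]
    · rw [if_neg c2, if_neg (by rintro rfl; simp at c2), LinearMap.comp_apply, kap_mon_sq,
        if_neg (by rintro rfl; simp at c)]
      simp

def AF (l p : Fin 4 → kk) : ℕ → P4 →ₗ[kk] kk
  | 0 => (aeval p).toLinearMap
  | s + 1 => ∑ i, (l i • AF l p s).comp (kp i)

theorem AF_succ (l p : Fin 4 → kk) (s : ℕ) (f : P4) :
    AF l p (s + 1) f = ∑ i, l i * AF l p s (kp i f) := by
  simp [AF, LinearMap.sum_apply]

theorem kp_Xh (i j : Fin 4) (g : P4) : kp j (Xh i * g ^ 2) = if i = j then g else 0 := by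
  rw [Xh_eq, kap_mon_sq]
  simp

theorem AF_EW (l p : Fin 4 → kk) (w : List (Fin 4)) (q : P4) :
    AF l p w.length (EW w q) = (w.map l).prod * aeval p q := by
  induction w with
  | nil => simp [AF, EW]
  | cons i w ih =>
    rw [List.length_cons, AF_succ, EW]
    simp only [kp_Xh]
    rw [Finset.sum_eq_single i]
    · rw [if_pos rfl, ih, List.map_cons, List.prod_cons, mul_assoc]
    · intro j _ h; rw [if_neg h.symm]; simp
    · simp

theorem kk_two : (2 : kk) = 0 := by decide

theorem AF_lin (l p : Fin 4 → kk) (h0 : ∑ i, l i * p i = 0) (s : ℕ) (h : P4) :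
    ∑ i, l i * AF l p s (X i * h) = 0 := by
  induction s generalizing h with
  | zero =>
    simp only [AF, AlgHom.toLinearMap_apply, map_mul, aeval_X, ← mul_assoc, ← Finset.sum_mul, h0,
      zero_mul]
  | succ s ih =>
    simp only [AF_succ]
    have e1 : ∀ i : Fin 4, kp i (X i * h) = X i * kap Finset.univ h := by
      intro i
      have : ∀ i : Fin 4, i ∉ ({i}ᶜ : Finset (Fin 4)) ∧ insert i ({i}ᶜ : Finset (Fin 4)) = Finset.univ := by
        decide
      rw [kap_X, if_neg (this i).1, (this i).2]
    have e2 : ∀ i j : Fin 4, i ≠ j → kp j (X i * h) = kp i (X j * h) := by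
      intro i j hij
      have : ∀ i j : Fin 4, i ≠ j → i ∈ ({j}ᶜ : Finset (Fin 4)) ∧ j ∈ ({i}ᶜ : Finset (Fin 4)) ∧
         ({j}ᶜ : Finset (Fin 4)).erase i = ({i}ᶜ : Finset (Fin 4)).erase j := by
        decide
      obtain ⟨t1, t2, t3⟩ := this i j hij
      rw [kap_X, kap_X, if_pos t1, if_pos t2, t3]
    have key := ih (kap Finset.univ h)
    simp only [Fin.sum_univ_four] at key ⊢
    rw [e2 1 0 (by decide), e2 2 0 (by decide), e2 3 0 (by decide), e2 2 1 (by decide),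
      e2 3 1 (by decide), e2 3 2 (by decide), e1, e1, e1, e1]
    have s0 := kk_sq (l 0)
    have s1 := kk_sq (l 1)
    have s2 := kk_sq (l 2)
    have s3 := kk_sq (l 3)
    linear_combination key + s0 * AF l p s (X 0 * kap Finset.univ h) +
      s1 * AF l p s (X 1 * kap Finset.univ h) + s2 * AF l p s (X 2 * kap Finset.univ h) +
      s3 * AF l p s (X 3 * kap Finset.univ h) +
      kk_two * (l 0 * l 1 * AF l p s (kp 1 (X 0 * h)) + l 0 * l 2 * AF l p s (kp 2 (X 0 * h)) +
       l 0 * l 3 * AF l p s (kp 3 (X 0 * h)) + l 1 * l 2 * AF l p s (kp 2 (X 1 * h)) +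
       l 1 * l 3 * AF l p s (kp 3 (X 1 * h)) + l 2 * l 3 * AF l p s (kp 3 (X 2 * h)))

theorem eval_kill (p : Fin 4 → kk) : hitSub 3 ≤ LinearMap.ker (aeval p : P4 →ₐ[kk] kk).toLinearMap := by
  refine Submodule.span_le.2 ?_
  rintro _ ⟨d, hd, g, hg, rfl⟩
  show aeval p (hc 3 (sqTotal g)) = 0
  interval_cases d
  · have : homog 0 ≤ LinearMap.ker ((aeval p : P4 →ₐ[kk] kk).toLinearMap.comp
        ((hc 3).comp sqTotal.toLinearMap)) := by
      apply homog_ind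
      intro m hm
      have : m = 0 := (Finsupp.degree_eq_zero_iff m).1 hm
      subst this
      show aeval p (hc 3 (sqTotal 1)) = 0
      rw [map_one, hc_of (m := 0) (isHomogeneous_one _ _)]; simp
    exact this hg
  · have : homog 1 ≤ LinearMap.ker ((aeval p : P4 →ₐ[kk] kk).toLinearMap.comp
        ((hc 3).comp sqTotal.toLinearMap)) := by
      apply homog_ind
      intro m hm
      obtain ⟨i, m1, h1, e1⟩ := mono_split m 0 hm
      have : m1 = 0 := (Finsupp.degree_eq_zero_iff m1).1 h1
      subst this
      show aeval p (hc 3 (sqTotal _)) = 0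
      rw [e1]
      show aeval p (hc 3 (sqTotal (X i * 1))) = 0
      rw [mul_one, sq_X, map_add, hc_of (homog_X i), hc_of (homog_sq (homog_X i))]; simp
    exact this hg
  · have : homog 2 ≤ LinearMap.ker ((aeval p : P4 →ₐ[kk] kk).toLinearMap.comp
        ((hc 3).comp sqTotal.toLinearMap)) := by
      apply homog_ind
      intro m hm
      obtain ⟨i, m1, h1, e1⟩ := mono_split m 1 hm
      obtain ⟨j, m2, h2, e2⟩ := mono_split m1 0 h1
      have : m2 = 0 := (Finsupp.degree_eq_zero_iff m2).1 h2
      subst this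
      show aeval p (hc 3 (sqTotal _)) = 0
      rw [e1, e2]
      show aeval p (hc 3 (sqTotal (X i * (X j * 1)))) = 0
      have t1 : (X i * X j : P4) ∈ homog 2 := homog_mul (homog_X i) (homog_X j)
      have e : sqTotal (X i * (X j * 1)) = X i * X j + X i ^ 2 * X j + X i * X j ^ 2 + (X i * X j) ^ 2 := by
        rw [mul_one, map_mul, sq_X, sq_X]; ring
      have t2 : (X i ^ 2 * X j : P4) ∈ homog 3 := homog_mul (homog_sq (homog_X i)) (homog_X j)
      have t3 : (X i * X j ^ 2 : P4) ∈ homog 3 := homog_mul (homog_X i) (homog_sq (homog_X j))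
      have t4 := homog_sq t1
      rw [e]
      simp only [map_add]
      rw [hc_of t1, hc_of t2, hc_of t3, hc_of t4]
      simp
      generalize p i = x
      generalize p j = y
      revert x y
      decide
    exact this hg

theorem AF_kill (l p : Fin 4 → kk) (h0 : ∑ i, l i * p i = 0) (s : ℕ) :
    hitSub (nn s) ≤ LinearMap.ker (AF l p s) := by
  induction s with
  | zero => exact eval_kill p
  | succ s ih =>
    have h1 : nn s - 1 + 1 = nn s := by have := nn_ge s; omega
    have := kill_step (m := nn s - 1) (fun i => l i • AF l p s) (by
      intro i f hf
      rw [h1] at hf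
      have := ih hf
      rw [LinearMap.mem_ker] at this ⊢
      simp [this]) (by
      intro h _
      have := AF_lin l p h0 s h
      simpa using this)
    rw [h1] at this
    exact this

def tv (a b : Fin 4) : P4 →ₐ[kk] P4 := aeval fun i => if i = a then X a + X b else X i

theorem tv_mon (a b : Fin 4) (u : Finset (Fin 4)) :
    tv a b (mon u) = mon u + if a ∈ u then X b * mon (u.erase a) else 0 := by
  rw [mon, map_prod]
  have e : ∀ u : Finset (Fin 4), a ∉ u → ∏ i ∈ u, tv a b (X i) = mon u := by
    intro u hu
    rw [mon]
    refine Finset.prod_congr rfl fun i hi => ?_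
    have : i ≠ a := by rintro rfl; exact hu hi
    simp [tv, this]
  split_ifs with h
  · rw [← Finset.mul_prod_erase u _ h, e _ (by simp), ← Finset.mul_prod_erase u _ h]
    simp only [tv, aeval_X, if_true, mon]; ring
  · rw [e u h, add_zero, mon]

theorem kp_tv (a b : Fin 4) (hab : a ≠ b) (j : Fin 4) (f : P4) :
    kp j (tv a b f) = tv a b (kp j f) + if j = a then tv a b (kp b f) else 0 := by
  refine (ind_eq ((kp j).comp (tv a b).toLinearMap) ((tv a b).toLinearMap.comp (kp j) +
    if j = a then (tv a b).toLinearMap.comp (kp b) else 0) ?_ f).trans (by split_ifs <;> simp)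
  intro u g
  have e : (if j = a then (tv a b).toLinearMap.comp (kp b) else 0 : P4 →ₗ[kk] P4) (mon u * g ^ 2) =
      if j = a ∧ u = {b}ᶜ then tv a b g else 0 := by
    by_cases c : j = a
    · simp only [c, if_true, true_and, LinearMap.comp_apply, kap_mon_sq]
      split_ifs <;> simp
    · simp [c]
  rw [LinearMap.add_apply, e]
  simp only [LinearMap.comp_apply, AlgHom.toLinearMap_apply]
  rw [map_mul, map_pow, kap_mul_sq, tv_mon, map_add, kap_mon, kap_mon_sq, add_mul]
  congr 1
  · split_ifs <;> simp
  · have f1 : ∀ (a b j : Fin 4) (u : Finset (Fin 4)), a ≠ b → a ∈ u → b ∈ ({j}ᶜ : Finset (Fin 4)) →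
      (u.erase a = ({j}ᶜ : Finset (Fin 4)).erase b ↔ j = a ∧ u = {b}ᶜ) := by decide
    have f2 : ∀ (a b j : Fin 4) (u : Finset (Fin 4)), a ≠ b → a ∈ u → b ∉ ({j}ᶜ : Finset (Fin 4)) →
      u.erase a ≠ insert b ({j}ᶜ : Finset (Fin 4)) ∧ ¬ (j = a ∧ u = {b}ᶜ) := by decide
    have f3 : ∀ (a b j : Fin 4) (u : Finset (Fin 4)), a ≠ b → a ∉ u →
      ¬ (j = a ∧ u = {b}ᶜ) := by decide
    by_cases c : a ∈ u
    · rw [if_pos c, kap_X]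
      by_cases c2 : b ∈ ({j}ᶜ : Finset (Fin 4))
      · rw [if_pos c2, kap_mon]
        simp only [f1 a b j u hab c c2]
        split_ifs <;> simp
      · rw [if_neg c2, kap_mon, if_neg (f2 a b j u hab c c2).1, if_neg (f2 a b j u hab c c2).2]
        simp
    · rw [if_neg c, if_neg (f3 a b j u hab c)]; simp

theorem AF_tv (a b : Fin 4) (hab : a ≠ b) (l p : Fin 4 → kk) (s : ℕ) (f : P4) :
    AF l p s (tv a b f) = AF (fun i => l i + if i = b then l a else 0)
      (fun i => p i + if i = a then p b else 0) s f := by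
  induction s generalizing f with
  | zero =>
    simp only [AF, AlgHom.toLinearMap_apply]
    have : (aeval p : P4 →ₐ[kk] kk).comp (tv a b) =
        aeval fun i => p i + if i = a then p b else 0 := by
      apply MvPolynomial.algHom_ext
      intro i
      simp only [tv, AlgHom.comp_apply, aeval_X]
      split_ifs with h
      · subst h; simp
      · simp
    rw [← this]; rfl
  | succ s ih =>
    simp only [AF_succ, kp_tv a b hab, map_add, apply_ite (AF l p s), map_zero, ih, mul_add, add_mul,
      Finset.sum_add_distrib, mul_ite, mul_zero, ite_mul, zero_mul, Finset.sum_ite_eq',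
      Finset.mem_univ, if_true]

theorem subst_X (M : Matrix (Fin 4) (Fin 4) kk) (i : Fin 4) :
    substM M (X i) = ∑ j, M i j • X j := by simp [substM]

theorem subst_sq (M : Matrix (Fin 4) (Fin 4) kk) (f : P4) :
    sqTotal (substM M f) = substM M (sqTotal f) := by
  have : sqTotal.comp (substM M) = (substM M).comp sqTotal := by
    apply MvPolynomial.algHom_ext
    intro i
    simp only [AlgHom.comp_apply, sq_X, subst_X, map_add, map_pow, map_sum, map_smul]
    rw [← frob_apply, map_sum, ← Finset.sum_add_distrib]
    refine Finset.sum_congr rfl fun j _ => ?_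
    rw [map_smul, frob_apply, smul_add]
  exact AlgHom.congr_fun this f

theorem subst_homog (M : Matrix (Fin 4) (Fin 4) kk) {n : ℕ} {f : P4} (hf : f ∈ homog n) :
    substM M f ∈ homog n := by
  have : homog n ≤ (homog n).comap (substM M).toLinearMap := by
    apply homog_ind
    intro m hm
    show substM M _ ∈ homog n
    clear hf
    induction n generalizing m with
    | zero =>
      have : m = 0 := (Finsupp.degree_eq_zero_iff m).1 hm
      subst this
      show substM M 1 ∈ homog 0
      rw [map_one]; exact isHomogeneous_one _ _
    | succ n ih =>
      obtain ⟨i, m1, h1, e1⟩ := mono_split m n hm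
      rw [e1, map_mul, add_comm]
      refine homog_mul ?_ (ih m1 h1)
      rw [subst_X]
      exact Submodule.sum_mem _ fun j _ => Submodule.smul_mem _ _ (homog_X j)
  exact this hf

theorem subst_hc (M : Matrix (Fin 4) (Fin 4) kk) (n : ℕ) (f : P4) :
    hc n (substM M f) = substM M (hc n f) := by
  have key := hom_ext ((hc n).comp (substM M).toLinearMap) ((substM M).toLinearMap.comp (hc n))
  simp only [LinearMap.comp_apply, AlgHom.toLinearMap_apply] at key
  refine key ?_ f
  intro k g hg
  rw [hc_of hg, hc_of (subst_homog M hg)]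
  split_ifs <;> simp

theorem subst_hit (M : Matrix (Fin 4) (Fin 4) kk) {n : ℕ} {f : P4} (hf : f ∈ hitSub n) :
    substM M f ∈ hitSub n := by
  have : hitSub n ≤ (hitSub n).comap (substM M).toLinearMap := by
    refine Submodule.span_le.2 ?_
    rintro _ ⟨d, hd, g, hg, rfl⟩
    show substM M (hc n (sqTotal g)) ∈ hitSub n
    rw [← subst_hc, ← subst_sq]
    exact hit_gen hd (subst_homog M hg)
  exact this hf

theorem subst_mul (M N : Matrix (Fin 4) (Fin 4) kk) (f : P4) :
    substM (M * N) f = substM N (substM M f) := by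
  have : substM (M * N) = (substM N).comp (substM M) := by
    apply MvPolynomial.algHom_ext
    intro i
    simp only [AlgHom.comp_apply, subst_X, map_sum, map_smul, Matrix.mul_apply, Finset.smul_sum,
      Finset.sum_smul, smul_smul]
    rw [Finset.sum_comm]
  exact AlgHom.congr_fun this f

theorem subst_one (f : P4) : substM 1 f = f := by
  have : substM 1 = AlgHom.id kk P4 := by
    apply MvPolynomial.algHom_ext
    intro i
    simp [subst_X, Matrix.one_apply, ite_smul]
  rw [this]; rfl

theorem subst_tv (a b : Fin 4) (f : P4) : substM (Matrix.transvection a b 1) f = tv a b f := by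
  have : substM (Matrix.transvection a b 1) = tv a b := by
    apply MvPolynomial.algHom_ext
    intro i
    simp only [subst_X, tv, aeval_X, Matrix.transvection, Matrix.add_apply, add_smul,
      Finset.sum_add_distrib, Matrix.one_apply, ite_smul, one_smul, zero_smul, Finset.sum_ite_eq,
      Finset.mem_univ, if_true]
    by_cases h : i = a
    · subst h
      simp [Matrix.single, ite_smul]
    · simp [Matrix.single, h, Ne.symm h]
  rw [this]

theorem tv_hit (a b : Fin 4) {n : ℕ} {f : P4} (hf : f ∈ hitSub n) : tv a b f ∈ hitSub n := by
  rw [← subst_tv]; exact subst_hit _ hf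

theorem tv_homog (a b : Fin 4) {n : ℕ} {f : P4} (hf : f ∈ homog n) : tv a b f ∈ homog n := by
  rw [← subst_tv]; exact subst_homog _ hf

theorem mem_invPre (n : ℕ) (f : P4) : f ∈ invPre n glSet ↔
    f ∈ homog n ∧ ∀ a b, a ≠ b → tv a b f - f ∈ hitSub n := by
  have h0 : f ∈ invPre n glSet ↔ f ∈ homog n ∧ ∀ M ∈ glSet, substM M f - f ∈ hitSub n := by
    simp only [invPre, Submodule.mem_inf, Submodule.mem_iInf, Submodule.mem_comap,
      LinearMap.sub_apply, AlgHom.toLinearMap_apply, LinearMap.id_apply]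
  rw [h0]
  refine and_congr_right fun hf => ⟨fun h a b hab => ?_, fun h M hM => ?_⟩
  · rw [← subst_tv]
    apply h
    rw [glSet, Set.mem_ofPred_eq, Matrix.isUnit_iff_isUnit_det, Matrix.det_transvection_of_ne a b hab]
    exact isUnit_one
  · have hd : M.det ≠ 0 := by
      rw [glSet, Set.mem_ofPred_eq, Matrix.isUnit_iff_isUnit_det] at hM
      exact hM.ne_zero
    refine Matrix.diagonal_transvection_induction_of_det_ne_zero
      (fun M => substM M f - f ∈ hitSub n) M hd ?_ ?_ ?_
    · intro D hD
      have : Matrix.diagonal D = 1 := by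
        rw [← Matrix.diagonal_one]
        congr 1
        ext i
        rw [Matrix.det_diagonal, Finset.prod_ne_zero_iff] at hD
        rcases kk_cases (D i) with h1 | h1
        · exact absurd h1 (hD i (Finset.mem_univ _))
        · rw [h1]
      rw [this, subst_one, sub_self]
      exact Submodule.zero_mem _
    · intro t
      rcases kk_cases t.c with h1 | h1
      · rw [Matrix.TransvectionStruct.toMatrix, h1, Matrix.transvection_zero, subst_one, sub_self]
        exact Submodule.zero_mem _
      · rw [Matrix.TransvectionStruct.toMatrix, h1, subst_tv]
        exact h _ _ t.hij
    · intro A B _ _ hA hB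
      rw [subst_mul]
      have := Submodule.add_mem _ (subst_hit B hA) hB
      rw [map_sub, sub_add_sub_cancel] at this
      exact this

theorem Qmk_zero (n : ℕ) {f : P4} (hf : f ∈ homog n) : Qmk n f = 0 ↔ f ∈ hitSub n := by
  rw [Qmk, LinearMap.comp_apply, Submodule.mkQ_apply, Submodule.Quotient.mk_eq_zero,
    Submodule.mem_comap]
  have : (homog n).subtype (toHomog n f) = f := hc_self hf
  rw [this]

theorem fin_zero (n : ℕ) (h : ∀ f ∈ invPre n glSet, f ∈ hitSub n) :
    Module.finrank kk ↥(QInv n glSet) = 0 := by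
  have : QInv n glSet = ⊥ := by
    rw [eq_bot_iff]
    rintro _ ⟨f, hf, rfl⟩
    rw [Submodule.mem_bot]
    exact (Qmk_zero n ((mem_invPre n f).1 hf).1).2 (h f hf)
  rw [this, finrank_bot]

theorem fin_one (n : ℕ) (f0 : P4) (h0 : f0 ∈ invPre n glSet) (h1 : f0 ∉ hitSub n)
    (h : ∀ f ∈ invPre n glSet, f ∈ hitSub n ∨ f - f0 ∈ hitSub n) :
    Module.finrank kk ↥(QInv n glSet) = 1 := by
  have hh : f0 ∈ homog n := ((mem_invPre n f0).1 h0).1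
  have : QInv n glSet = Submodule.span kk {Qmk n f0} := by
    apply le_antisymm
    · rintro _ ⟨f, hf, rfl⟩
      have hf2 := ((mem_invPre n f).1 hf).1
      rcases h f hf with h2 | h2
      · rw [(Qmk_zero n hf2).2 h2]; exact Submodule.zero_mem _
      · have := (Qmk_zero n (Submodule.sub_mem _ hf2 hh)).2 h2
        rw [map_sub, sub_eq_zero] at this
        rw [this]; exact Submodule.mem_span_singleton_self _
    · rw [Submodule.span_singleton_le_iff_mem]
      exact ⟨f0, h0, rfl⟩
  rw [this, finrank_span_singleton]
  rwa [Ne, Qmk_zero n hh]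

def bits (a : ℕ) : List (Fin 4) := (List.finRange 4).filter fun i => a.testBit i

def wd (s a : ℕ) : List (Fin 4) := (bits a ++ List.replicate s ((bits a).headD 0)).take s

theorem wd_length (s a : ℕ) : (wd s a).length = s := by
  simp [wd]

theorem wd_fs (s a : ℕ) (h1 : 1 ≤ (bits a).length) (h2 : (bits a).length ≤ s) :
    (wd s a).toFinset = (bits a).toFinset := by
  rw [wd]
  cases hb : bits a with
  | nil => rw [hb] at h1; simp at h1
  | cons x t =>
    rw [hb] at h2
    rw [List.take_append, List.take_of_length_le h2]
    ext i
    simp only [List.headD_cons, List.take_replicate, List.mem_toFinset, List.mem_append,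
      List.mem_replicate, List.mem_cons]
    tauto

def cw (s c : ℕ) : P4 := EW (wd s (c / 16)) (mono (wd 3 (c % 16)))

theorem homog_cw (s c : ℕ) : cw s c ∈ homog (nn s) := by
  have := homog_EW (wd s (c / 16)) (q := mono (wd 3 (c % 16)))
    (homog_cast (homog_mono _) (wd_length 3 _))
  rwa [wd_length] at this

def LP (s m : ℕ) : P4 := ∑ c ∈ Finset.range 256, if m.testBit c then cw s c else 0

theorem LP_xor (s m m' : ℕ) : LP s (m ^^^ m') = LP s m + LP s m' := by
  rw [LP, LP, LP, ← Finset.sum_add_distrib]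
  refine Finset.sum_congr rfl fun c _ => ?_
  rw [Nat.testBit_xor]
  cases m.testBit c <;> cases m'.testBit c <;> simp [p4_two]

theorem LP_bit (s c : ℕ) (h : c < 256) : LP s (2 ^ c) = cw s c := by
  rw [LP, Finset.sum_eq_single c]
  · simp
  · intro d _ hd
    rw [Nat.testBit_two_pow, if_neg]
    simpa using hd.symm
  · intro h2; simp at h2; omega

theorem LP_zero (s : ℕ) : LP s 0 = 0 := by simp [LP]

def rcode (c : ℕ) (i : Fin 4) : ℕ := (c / 16 ||| 2 ^ i.val) * 16 + (c % 16 ||| 2 ^ i.val)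

def relmask (c : ℕ) : ℕ := 2 ^ rcode c 0 ^^^ 2 ^ rcode c 1 ^^^ 2 ^ rcode c 2 ^^^ 2 ^ rcode c 3

theorem or_lt (b : ℕ) (hb : b < 16) (i : Fin 4) : b ||| 2 ^ i.val < 16 := by
  revert b; revert i; decide

theorem bits_or (a : ℕ) (ha : a < 16) (i : Fin 4) :
    (bits (a ||| 2 ^ i.val)).toFinset = insert i (bits a).toFinset := by
  revert a; revert i; decide +kernel

theorem bits_or_len (a : ℕ) (ha : a < 16) (i : Fin 4) : 1 ≤ (bits (a ||| 2 ^ i.val)).length ∧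
    (bits (a ||| 2 ^ i.val)).length ≤ (bits a).length + 1 := by
  revert a; revert i; decide +kernel

theorem rcode_div (c : ℕ) (i : Fin 4) : rcode c i / 16 = c / 16 ||| 2 ^ i.val := by
  have := or_lt (c % 16) (Nat.mod_lt _ (by norm_num)) i
  rw [rcode]; omega

theorem rcode_mod (c : ℕ) (i : Fin 4) : rcode c i % 16 = c % 16 ||| 2 ^ i.val := by
  have := or_lt (c % 16) (Nat.mod_lt _ (by norm_num)) i
  rw [rcode]; omega

theorem LP_rel (s c : ℕ) (hc : c < 256) (h1 : (bits (c / 16)).length + 1 ≤ s)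
    (h2 : 1 ≤ (bits (c % 16)).length) (h3 : (bits (c % 16)).length ≤ 2) :
    LP s (relmask c) ∈ hitSub (nn s) := by
  obtain ⟨s, rfl⟩ : ∃ s', s = s' + 1 := ⟨s - 1, by omega⟩
  have ha : c / 16 < 16 := by omega
  have hb : c % 16 < 16 := by omega
  have hlt : ∀ i, rcode c i < 256 := by
    intro i
    have := or_lt _ ha i
    have := or_lt _ hb i
    rw [rcode]; omega
  have e : LP (s + 1) (relmask c) = ∑ i, cw (s + 1) (rcode c i) := by
    rw [relmask, LP_xor, LP_xor, LP_xor, LP_bit _ _ (hlt 0), LP_bit _ _ (hlt 1), LP_bit _ _ (hlt 2),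
      LP_bit _ _ (hlt 3), Fin.sum_univ_four]
  rw [e]
  have hJ : mono (wd 2 (c % 16)) ∈ homog 2 := homog_cast (homog_mono _) (wd_length _ _)
  have gen : ∀ W : Fin 4 → List (Fin 4), (∀ i, (W i).length = s + 1) →
      (∀ i, (W i).toFinset = insert i (bits (c / 16)).toFinset) →
      ∑ i, EW (W i) (X i * mono (wd 2 (c % 16))) ∈ hitSub (nn (s + 1)) →
      ∑ i, cw (s + 1) (rcode c i) ∈ hitSub (nn (s + 1)) := by
    intro W w1 w2 w3
    have h4 : ∀ i, cw (s + 1) (rcode c i) - EW (W i) (X i * mono (wd 2 (c % 16))) ∈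
        hitSub (nn (s + 1)) := by
      intro i
      obtain ⟨l1, l2⟩ := bits_or_len _ ha i
      obtain ⟨l3, l4⟩ := bits_or_len _ hb i
      rw [← mono_cons]
      have := EW_all (wd (s + 1) (rcode c i / 16)) (W i) (wd 3 (rcode c i % 16))
        (i :: wd 2 (c % 16)) (by rw [wd_length, w1]) (by
          rw [w2, rcode_div, wd_fs _ _ l1 (by omega), bits_or _ ha]) (wd_length _ _)
          (by rw [List.length_cons, wd_length]) (by
          rw [rcode_mod, wd_fs _ _ l3 (by omega), bits_or _ hb, List.toFinset_cons,
            wd_fs _ _ h2 h3])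
      rw [wd_length] at this
      exact this
    have h5 := Submodule.add_mem _ (Submodule.sum_mem _ fun i (_ : i ∈ Finset.univ) => h4 i) w3
    rw [← Finset.sum_add_distrib] at h5
    simpa using h5
  by_cases h0 : 1 ≤ (bits (c / 16)).length
  · refine gen (fun i => i :: wd s (c / 16)) (fun i => by rw [List.length_cons, wd_length])
      (fun i => by rw [List.toFinset_cons, wd_fs _ _ h0 (by omega)]) ?_
    have := rel_word (wd s (c / 16)) hJ
    rwa [wd_length] at this
  · refine gen (fun i => List.replicate (s + 1) i) (fun i => by simp)
      (fun i => ?_) (rel_rep s hJ)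
    have : bits (c / 16) = [] := List.length_eq_zero_iff.1 (by omega)
    rw [this, List.toFinset_replicate_of_ne_zero (by omega)]
    simp

def red (rows : List (ℕ × ℕ)) (r : ℕ) : ℕ :=
  rows.foldl (fun r x => if r.testBit x.1 then r ^^^ x.2 else r) r

def elimStep (rows : List (ℕ × ℕ)) (r : ℕ) : List (ℕ × ℕ) :=
  if r = 0 then rows else rows ++ [(r.log2, r)]

def elims (R : List ℕ) : List (ℕ × ℕ) :=
  R.foldl (fun rows r => elimStep rows (red rows r)) []

theorem red_mem (s : ℕ) (N : Submodule kk P4) (rows : List (ℕ × ℕ))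
    (h : ∀ x ∈ rows, LP s x.2 ∈ N) (r : ℕ) : LP s (red rows r) ∈ N ↔ LP s r ∈ N := by
  induction rows generalizing r with
  | nil => rfl
  | cons x rows ih =>
    rw [red, List.foldl_cons, ← red, ih (fun y hy => h y (List.mem_cons_of_mem _ hy))]
    split_ifs
    · rw [LP_xor]
      exact Submodule.add_mem_iff_left _ (h x List.mem_cons_self)
    · rfl

theorem elims_mem (s : ℕ) (N : Submodule kk P4) (R : List ℕ) (h : ∀ r ∈ R, LP s r ∈ N) :
    ∀ x ∈ elims R, LP s x.2 ∈ N := by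
  have : ∀ (R : List ℕ) (rows : List (ℕ × ℕ)), (∀ r ∈ R, LP s r ∈ N) →
      (∀ x ∈ rows, LP s x.2 ∈ N) →
      ∀ x ∈ R.foldl (fun rows r => elimStep rows (red rows r)) rows, LP s x.2 ∈ N := by
    intro R
    induction R with
    | nil => intro rows _ h; exact h
    | cons r R ih =>
      intro rows h1 h2
      rw [List.foldl_cons]
      apply ih _ (fun y hy => h1 y (List.mem_cons_of_mem _ hy))
      intro x hx
      rw [elimStep] at hx
      split_ifs at hx
      · exact h2 x hx
      · rw [List.mem_append, List.mem_singleton] at hx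
        rcases hx with hx | rfl
        · exact h2 x hx
        · exact (red_mem s N rows h2 r).2 (h1 r List.mem_cons_self)
  exact this R [] h (by simp)

def sub (c F : ℕ) : Bool := (c / 16 &&& F / 16 == c / 16) && (c % 16 &&& F % 16 == c % 16)

def flags : List ℕ := (List.range 256).filter fun F =>
  F / 16 != 0 && F % 16 != 0 && (bits (F / 16 &&& F % 16)).length % 2 == 0

def valid (k c : ℕ) : Bool := decide (1 ≤ (bits (c / 16)).length) && decide ((bits (c / 16)).length ≤ k) &&
  decide (1 ≤ (bits (c % 16)).length) && decide ((bits (c % 16)).length ≤ 3)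

def rels (k : ℕ) : List ℕ := ((List.range 256).filter fun c =>
  decide ((bits (c / 16)).length + 1 ≤ k) && decide (1 ≤ (bits (c % 16)).length) &&
    decide ((bits (c % 16)).length ≤ 2)).map relmask

def xorD (FD : List (ℕ × ℕ)) (c r : ℕ) : ℕ :=
  FD.foldl (fun r x => if sub c x.1 then r ^^^ x.2 else r) r

def check (k : ℕ) (Rs Ds : List ℕ) : Bool :=
  (fun rows => ((List.range 256).filter (valid k)).all fun c =>
    red rows (xorD (flags.zip Ds) c (2 ^ c)) == 0) (elims (rels k ++ Rs))

def vec (m : ℕ) : Fin 4 → kk := fun i => if m.testBit i then 1 else 0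

def Psi (s F : ℕ) : P4 →ₗ[kk] kk := AF (vec (F / 16)) (vec (F % 16)) s

theorem vec_prod (m : ℕ) (w : List (Fin 4)) :
    (w.map (vec m)).prod = if ∀ i ∈ w.toFinset, m.testBit i then 1 else 0 := by
  induction w with
  | nil => simp
  | cons i w ih =>
    rw [List.map_cons, List.prod_cons, ih, vec, List.toFinset_cons]
    simp only [Finset.forall_mem_insert]
    by_cases h : m.testBit i <;> simp [h]

theorem bits_sub (a l : ℕ) (ha : a < 16) (hl : l < 16) :
    (∀ i ∈ (bits a).toFinset, l.testBit i) ↔ (a &&& l == a) = true := by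
  revert ha a; revert l; decide +kernel

theorem aeval_mono (p : Fin 4 → kk) (J : List (Fin 4)) : aeval p (mono J) = (J.map p).prod := by
  induction J with
  | nil => simp [mono]
  | cons i J ih => rw [mono_cons, map_mul, ih, aeval_X, List.map_cons, List.prod_cons]

theorem Psi_cw (s c F : ℕ) (hc : c < 256) (hF : F < 256) (hv : valid s c = true) :
    Psi s F (cw s c) = if sub c F then 1 else 0 := by
  simp only [valid, Bool.and_eq_true, decide_eq_true_eq] at hv
  obtain ⟨⟨⟨h1, h2⟩, h3⟩, h4⟩ := hv
  have := AF_EW (vec (F / 16)) (vec (F % 16)) (wd s (c / 16)) (mono (wd 3 (c % 16)))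
  rw [wd_length] at this
  rw [Psi, cw, this, aeval_mono, vec_prod, vec_prod, wd_fs _ _ h1 h2, wd_fs _ _ h3 h4]
  simp only [bits_sub (c / 16) (F / 16) (by omega) (by omega),
    bits_sub (c % 16) (F % 16) (by omega) (by omega), sub, Bool.and_eq_true]
  split_ifs <;> simp_all

theorem flags_lt {F : ℕ} (h : F ∈ flags) : F < 256 := by
  rw [flags, List.mem_filter, List.mem_range] at h
  exact h.1

theorem flags_orth : ∀ F ∈ flags, ∑ i, vec (F / 16) i * vec (F % 16) i = 0 := by
  decide +kernel

theorem Psi_kill (s : ℕ) {F : ℕ} (hF : F ∈ flags) {f : P4} (hf : f ∈ hitSub (nn s)) :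
    Psi s F f = 0 := AF_kill _ _ (flags_orth F hF) s hf

theorem bits_surj (S : Finset (Fin 4)) : ∃ a, a < 16 ∧ (bits a).toFinset = S ∧
    (bits a).length = S.card := by
  revert S; decide +kernel

def TT (s : ℕ) (FD : List (ℕ × ℕ)) : P4 →ₗ[kk] P4 :=
  (FD.map fun x => (Psi s x.1).smulRight (LP s x.2)).sum

theorem TT_cons (s : ℕ) (x : ℕ × ℕ) (FD : List (ℕ × ℕ)) (f : P4) :
    TT s (x :: FD) f = Psi s x.1 f • LP s x.2 + TT s FD f := by
  simp [TT]

theorem TT_zero (s : ℕ) (FD : List (ℕ × ℕ)) (f : P4) (h : ∀ x ∈ FD, Psi s x.1 f = 0) :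
    TT s FD f = 0 := by
  induction FD with
  | nil => simp [TT]
  | cons x FD ih =>
    rw [TT_cons, h x List.mem_cons_self, ih (fun y hy => h y (List.mem_cons_of_mem _ hy))]; simp

theorem TT_cw (s c : ℕ) (hc : c < 256) (hv : valid s c = true) (FD : List (ℕ × ℕ))
    (hFD : ∀ x ∈ FD, x.1 < 256) (r : ℕ) :
    LP s (xorD FD c r) = LP s r + TT s FD (cw s c) := by
  induction FD generalizing r with
  | nil => simp [xorD, TT]
  | cons x FD ih =>
    rw [xorD, List.foldl_cons, ← xorD, ih (fun y hy => hFD y (List.mem_cons_of_mem _ hy)), TT_cons,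
      Psi_cw s c _ hc (hFD x List.mem_cons_self) hv]
    split_ifs
    · rw [LP_xor, one_smul, add_assoc]
    · rw [zero_smul, zero_add]

theorem recon (s k : ℕ) (hs : 1 ≤ s) (hks : k ≤ s) (hk : k = 4 ∨ k = s) (N : Submodule kk P4)
    (hN : hitSub (nn s) ≤ N)
    (Rs Ds : List ℕ) (hR : ∀ r ∈ Rs, LP s r ∈ N) (chk : check k Rs Ds = true) (f : P4)
    (hf : f ∈ homog (nn s)) (h0 : ∀ F ∈ flags, Psi s F f = 0) : f ∈ N := by
  have hrows : ∀ x ∈ elims (rels k ++ Rs), LP s x.2 ∈ N := by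
    apply elims_mem
    intro r hr
    rw [List.mem_append] at hr
    rcases hr with hr | hr
    · rw [rels, List.mem_map] at hr
      obtain ⟨c, hc, rfl⟩ := hr
      simp only [List.mem_filter, List.mem_range, Bool.and_eq_true, decide_eq_true_eq] at hc
      obtain ⟨c1, ⟨c2, c3⟩, c4⟩ := hc
      exact hN (LP_rel s c c1 (by omega) c3 c4)
    · exact hR r hr
  have hzip : ∀ x ∈ flags.zip Ds, x.1 ∈ flags := fun x hx => (List.of_mem_zip (a := x.1) (b := x.2) hx).1
  have key : homog (nn s) ≤ N.comap (LinearMap.id + TT s (flags.zip Ds)) := by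
    refine (span_words s).trans (sup_le (Submodule.span_le.2 ?_) ?_)
    · rintro _ ⟨w, J, hw, hJ, rfl⟩
      obtain ⟨a, a1, a2, a3⟩ := bits_surj w.toFinset
      obtain ⟨b, b1, b2, b3⟩ := bits_surj J.toFinset
      have ca := List.toFinset_card_le w
      have cb := List.toFinset_card_le J
      have c4 : w.toFinset.card ≤ 4 := by
        have := Finset.card_le_univ w.toFinset
        simpa using this
      have p1 : 1 ≤ (bits a).length := by
        rw [a3, Nat.one_le_iff_ne_zero, Ne, Finset.card_eq_zero, List.toFinset_eq_empty_iff]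
        rintro rfl; simp at hw; omega
      have p2 : 1 ≤ (bits b).length := by
        rw [b3, Nat.one_le_iff_ne_zero, Ne, Finset.card_eq_zero, List.toFinset_eq_empty_iff]
        rintro rfl; simp at hJ
      set c := a * 16 + b with hc
      have hc1 : c / 16 = a := by omega
      have hc2 : c % 16 = b := by omega
      have hv : valid k c = true := by
        simp only [valid, Bool.and_eq_true, decide_eq_true_eq, hc1, hc2]
        omega
      have hv2 : valid s c = true := by
        simp only [valid, Bool.and_eq_true, decide_eq_true_eq, hc1, hc2]
        omega
      have hclt : c < 256 := by omega
      have e1 : EW w (mono J) - cw s c ∈ hitSub (nn s) := by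
        have := EW_all w (wd s a) J (wd 3 b) (by rw [wd_length, hw])
          (by rw [wd_fs _ _ p1 (by omega), a2]) hJ (wd_length _ _)
          (by rw [wd_fs _ _ p2 (by omega), b2])
        rw [hw] at this
        rw [cw, hc1, hc2]; exact this
      have e2 : cw s c + TT s (flags.zip Ds) (cw s c) ∈ N := by
        rw [← LP_bit s c hclt, LP_bit s c hclt]
        nth_rewrite 1 [← LP_bit s c hclt]
        rw [← TT_cw s c hclt hv2 _ (fun x hx => flags_lt (hzip x hx)), ← red_mem s N _ hrows]
        rw [check, List.all_eq_true] at chk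
        have := chk c (by rw [List.mem_filter, List.mem_range]; exact ⟨hclt, hv⟩)
        rw [beq_iff_eq] at this
        rw [this, LP_zero]; exact Submodule.zero_mem _
      have e3 : TT s (flags.zip Ds) (EW w (mono J) - cw s c) = 0 :=
        TT_zero _ _ _ fun x hx => Psi_kill s (hzip x hx) e1
      show EW w (mono J) + TT s (flags.zip Ds) (EW w (mono J)) ∈ N
      have e4 := Submodule.add_mem _ (hN e1) e2
      rw [map_sub, sub_eq_zero] at e3
      rw [e3]
      convert e4 using 1
      ring
    · intro g hg
      show g + TT s (flags.zip Ds) g ∈ N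
      rw [TT_zero _ _ _ fun x hx => Psi_kill s (hzip x hx) hg, add_zero]
      exact hN hg
  have h1 : f + TT s (flags.zip Ds) f ∈ N := key hf
  rwa [TT_zero _ _ _ fun x hx => h0 _ (hzip x hx), add_zero] at h1

def D1 : List ℕ := [0, 0, 0, 0, 0, 0, 0, 0, 0, 0, 0, 0, 0, 0, 0, 0, 0, 0, 0, 0, 0, 0, 0, 0, 0, 0, 0, 0, 0, 0, 0,
  75262715877686236938240, 0, 0, 0, 0, 0, 0, 75262715820736407797760, 0, 0, 0, 0, 0, 0,
  75262715877687674142720, 0, 0, 0, 0, 0, 0, 0, 0, 0, 0, 69417602851871446603418178653419745574912,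
  81667768061025231235637124427543058841600, 65334214448820184988509699503122043371520, 0, 0, 0, 0,
  57848002376559538836181815532834321858560, 81667768061025231235637124361316178984960,
  54445178707350154157091416240876621004800, 0, 40140115113737975758848, 0, 9380351705088,
  46278401901247631068945452435613306322944, 81667768061025231235637124427544574689280,
  43556142965880123325673133002081505378304, 50175143880490158653440, 60210172670606749728768, 178913280,
  14070312861696, 57848002376559538788773683300930599518208, 69417602851871446546528419916958606426112,
  46278401901247631031018946611305173876736, 0, 2951479096358687866880, 3541774862978657157120,
  2361183250265856409600, 69417602851871446603418178653421463535616,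
  54445178707350154157091416285029284839424, 43556142965880123325673133002081943289856, 37968090234880,
  581566464, 4427218644537163382784, 14072102387712, 57848002376559538836181815570364247441408,
  65334214448820184988509699489878149562368, 43556142965880123325673132993251625271296, 877895745536,
  40140115113223152336896, 4427218577691813478400, 44565260664832,
  46278401901247631068945452435613878976512, 54445178707350154157091416285029385895936,
  65334214448820184988509699503123828703232, 50175143918458170900480, 60210172670608472145920,
  4427218644538684473344, 715784192]

def D2 : List ℕ := [0, 0, 0, 0, 0, 0, 0, 0, 87692105306922042867318877323241668132346983874560, 0,
  80814575421053634798147600384000, 0, 19015049145620148600300869648384, 0, 0,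
  2007067067867756083028356841245863538993397760, 0, 1849656504010382638904770560, 0,
  290142196707511003450572800, 0, 62771017403558755337416534675927815469857076744449318453248,
  75325220842180463490010558236659196842428987590959784787968,
  50216813894786395840631877028237949046855703792808015953920, 80812725839813632149540586389504,
  205567564526256163905863680, 16162545213120154959813592875008, 10775194555991570896109714407424,
  2274676010250123560436643263867553770583621632, 58460957523044057965749754167795704156997130649600,
  936631298338286172099242672397932515337175040, 1291970145107312640, 57420896971390976,
  12676699430413477436196513120256, 154742504946701332088750080,
  49691813894587449260112096526774940601453060816896, 17540383526961879279709260095228469845344265437184,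
  11692771323983973396957495677977405451105971732480, 80814575421054926711443016515584, 47888714124361728,
  15212039316496172883204979163136, 10141204801825871249601670021120,
  758225336750041186812214421308324888606408704, 58460823718572866782010711525354929926160041115648,
  2363878991044246053234899894320778318496923648, 1849656505302352782508032000, 38280597405302784,
  12676506002282339095528459075584, 232113757420051998861557760,
  62771017353867030703657881955591715911821374151420488450048,
  75325220842178188883417910964972070852418495044597544910848,
  50216813894785637661573528888299389213398696886795040194560,
  87690098321521943172261080202039716736069797412864, 223061897164013581762942406004500002444410880,
  17538019713305049482476210183844716612589493813248, 11692191548164954566636093817480902934485464121344,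
  1864163614713827017391603712, 2170172072460288000, 868068829960994816,
  53875972579257810948868622909440, 785801783328221516224004096, 12676699430414155790890291036160,
  154742505489385087060541440, 40723896920203874879527951794176,
  87692105306922042867318877323243838238292607893504, 723434842982842368, 16164646265985283164294776619008,
  10775651489811810545254547849216, 15212039316496986896416580960256, 10141204801826413925076071219200,
  621387871860631948455051264, 2007067067867756083028356843416035609933905920, 578712552689762304,
  53875771897571754920425614737408, 2101113075358294335637422080, 12676506002283017450222331756544,
  232113758234077631508774912, 62771017403558755337416534716651707506949535228928673185792,
  75325220842180463490010558236661060949153935926113159479296,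
  50216813894786395840631877028238570396801054096847566143488, 19014759007852888319008457621504,
  193431083385863713054654464, 15211807206281449792138166009856, 10141359546692543867292519366656,
  2274676010250123562300806878574625386815422464, 58460957523044057965749754167796427547687177027584,
  936631298338286172099242672976645067320590336, 53875972579257853170115122561024,
  785801783361998513420369920, 2228718867617153024, 922112025493635072,
  49691813894587449300835993446978809813882762297344, 17540383526961879279709260095229337901029841174528,
  11692771323983973396957495677977984154896355557376, 16164646265985333828914411208704,
  10775651489811844321667637575680, 19015049145622377252320094715904, 768471251573407744,
  758225336750041187433602293164453236861698048, 58460823718572866782010711525355653316850187501568,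
  2363878991044246053234899895188847146672586752, 53875771897571797141672121335808,
  2101113075408959831445340160, 290142198936229869546635264, 614741349708726272]

def D3 : List ℕ := [2468256837131180721290350900105321888367329022882235219985563648,
  2873429141799631034491726699229616741787051173331599360,
  1149371658013295635809927320436318687577379083800018944, 2648071400318970764861232456400896000,
  1059228561242217911629181082606239744, 1246151246338500829783548988559458304,
  996920997070800662965976122247479296, 53920716086580898063451931230912172278414217998767874624114598608896,
  2873516829980006801593204344616369174054049888419708928,
  957868173864899110171516400046041015977093464460361728, 2648152211199914513753723842894757888,
  882744341722818268647326048088752128, 1246170260807362056517127282599526400,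
  830780173871574703627365631280676864, 822752279426850792224052867516981079975372087088486048853917696,
  2873429139881766947418093108767402773631781080429232128,
  766247771191169766593828698279826950143806932328120320, 2648071398474149964129308334199144448,
  706152373382124429374556446434263040, 1246151246048358633076037985180450816,
  664613997892457937066644879848898560, 53920716149351915367627147982134602556610406557948160759103886458880,
  2468332162352022897293691870957433919257027797225312084694138880,
  822802496240745577192645806688049436866132973266222525748084736, 2648152213044810575917323006121607168,
  882744341923550129804975835368128512, 1059244723787431031676054501765808128,
  706163148576680420873394961032806400, 2468256837131180719104877870649320820496828632105274895492972544,
  957809713264187989290040620943300974911991587599810560,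
  766247770611350391432032496754640779929593270079848448, 2648071400318970763577143610642530304,
  1059228561242217911578515585144324096, 830767497559000552426610770943016960,
  664613998047200441941288616754413568, 53920716086580898013760206539305517140794687614866024616107628822528,
  1149389193669064615600714923226614127405667791071608832,
  766259462446043077067143282151076084937111860714405888, 2648152211199914512469578150448332800,
  882744341722818268605066902285451264, 996936208645889644298755329503526912,
  664624139097259762865836886335684608, 822752279426850791555030511561062385729300538870754606338539520,
  957809713041180537304734389334515661047167304419246080,
  1149371655649416644765681267201418793256600765303095296, 2648071398474149962845219489939849216,
  706152373382124429340779448723701760, 830767497365572421288270102821601280,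
  996920996838686905545924123385921536, 53920716149351915417318961934570054152558144905884777474995886489600,
  2468332162352022899479234318016286856714689915228084299450286080,
  822802496240745577861714441045869378126645445342567463687028736,
  2873516831897952556434898960309818777171324397557383168,
  957868173998758026541407489242840547449759903173312512,
  1149389196033008940859409796646502530564609412818403328,
  766259463382717931548395334373644429893819912044544000,
  2468256837131180721290350900105321886508001111446866719296978944,
  2873429141799631034491726699229616739624760400220258304,
  1149371658013295635809927320436318686716065653285584896, 882690466156438086232522081719418880,
  706152372925150468986017665375535104, 830767497559000551748256076912394240,
  664613998047200441398604861529915392, 53920716086580898063451931230912172237690325914267278203103349833728,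
  2873516829980006801593204344616369171891692991443763200,
  957868173864899110171516400046041015259288189735665664, 1059244721686257746202512105549070336,
  706163147790838497468341403699380224, 996936208645889643484717275810889728,
  664624139097259762323144850540593152, 822752279426850792224052867516981079358819918506312617101885440,
  2873429139881766947418093108767402771469490308769775616,
  766247771191169766593828698279826949569597979270184960, 882690465950920696898035122008227840,
  1059228559141104836277642146409873408, 830767497365572420609915408948920320,
  996920996838686904731898490738704384, 53920716149351915367627147982134602515886509590336159277240470208512,
  2468332162352022897293691870957433917397642996037962522237206528,
  822802496240745577192645806688049436249542878182728385419673600, 1246170261097508678214430261782773760,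
  830780174065005785476286841188515840, 996936208878006942571544209426219008,
  664624139252004628381029472950812672, 2468256837131180719104877870649320818637500720676661795893149696,
  957809713264187989290040620943300974194230396820520960,
  766247770611350391432032496754640779355384317456416768, 882690466156438086184671335667466240,
  706152372925150468947737068533972992, 1246151246338500827554830120942305280,
  996920997070800662043864096753844224, 53920716086580898013760206539305517100070795530365433862194559320064,
  1149389193669064615600714923226614126544341219737075712,
  766259462446043077067143282151076084362894146491383808, 1059244721686257746145090334126768128,
  706163147790838497430060222751178752, 1246170260807362054288341569560903680,
  830780173871574702858894379707269120, 822752279426850791555030511561062385112748370293084774715228160,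
  957809713041180537304734389334515660329406113807073280,
  1149371655649416644765681267201418792395287336568487936, 882690465950920696850184375967416320,
  1059228559141104836220221251160899584, 1246151246048358630847319119012823040,
  664613997892457936451903530140172288]

def F0 : List ℕ := [17, 18, 19, 20, 21, 22, 23, 24, 25, 26, 27, 28, 29, 30, 33, 34,
  35, 36, 37, 38, 39, 40, 41, 42, 43, 44, 45, 49, 50, 51, 52, 53,
  54, 55, 56, 57, 58, 59, 60, 65, 66, 67, 68, 69, 70, 71, 72, 73,
  74, 75, 81, 82, 83, 84, 85, 86, 87, 88, 89, 90, 97, 98, 99, 100,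
  101, 102, 103, 104, 105, 113, 114, 115, 116, 117, 118, 119, 120, 129, 130, 131,
  132, 133, 134, 135, 145, 146, 147, 148, 149, 150, 161, 162, 163, 164, 165, 177,
  178, 179, 180, 193, 194, 195, 209, 210, 225]

def Zc : List ℕ := [17, 34, 68, 136]

def Zm : ℕ := 87112285931760246646919047407729194958848

def Ym : List ℕ := [5708990770823839524252486690912940512233259008, 374144419156711147061410967775596682996382567497728,
  1606938044258990275541962092341479517590406838267604713340928,
  100433627772032943459298925437143931706563263989303956471808]

theorem chk1 : check 1 [Zm] D1 = true := by decide +kernel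

theorem chk2 : check 2 Ym D2 = true := by decide +kernel

theorem chk3 : check 3 [] D3 = true := by decide +kernel

theorem chk4 : check 4 [] D3 = true := by decide +kernel

def tF (a b : Fin 4) (F : ℕ) : ℕ :=
  (if (F / 16).testBit a then F / 16 ^^^ 2 ^ b.val else F / 16) * 16 +
    (if (F % 16).testBit b then F % 16 ^^^ 2 ^ a.val else F % 16)

theorem vec_x : ∀ m < 16, ∀ a b : Fin 4, (if m.testBit a then m ^^^ 2 ^ b.val else m) < 16 ∧
    ∀ i, vec (if m.testBit a then m ^^^ 2 ^ b.val else m) i =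
      vec m i + if i = b then vec m a else 0 := by
  unfold vec
  decide +kernel

theorem Psi_tv (s F : ℕ) (hF : F < 256) (a b : Fin 4) (hab : a ≠ b) (f : P4) :
    Psi s F (tv a b f) = Psi s (tF a b F) f := by
  obtain ⟨h1, h2⟩ := vec_x (F / 16) (by omega) a b
  obtain ⟨h3, h4⟩ := vec_x (F % 16) (by omega) b a
  have e1 : tF a b F / 16 = if (F / 16).testBit a then F / 16 ^^^ 2 ^ b.val else F / 16 := by
    rw [tF, Nat.add_div_of_dvd_right (Nat.dvd_mul_left _ _), Nat.mul_div_cancel _ (by norm_num),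
      Nat.div_eq_of_lt h3, add_zero]
  have e2 : tF a b F % 16 = if (F % 16).testBit b then F % 16 ^^^ 2 ^ a.val else F % 16 := by
    rw [tF, Nat.mul_comm, Nat.mul_add_mod, Nat.mod_eq_of_lt h3]
  rw [Psi, Psi, AF_tv a b hab, e1, e2, funext h2, funext h4]

def grow (S : List ℕ) : List ℕ := flags.filter fun F => S.contains F ||
  (List.finRange 4).any fun a => (List.finRange 4).any fun b =>
    decide (a ≠ b) && S.contains (tF a b F)

theorem grow_all : ∀ F ∈ flags, F ∈ grow^[5] [18] := by decide +kernel

theorem tF_flags : ∀ F ∈ flags, ∀ a b : Fin 4, a ≠ b → tF a b F ∈ flags := by decide +kernel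

theorem inv_const (s : ℕ) (f : P4) (h : ∀ a b, a ≠ b → tv a b f - f ∈ hitSub (nn s)) :
    ∀ F ∈ flags, Psi s F f = Psi s 18 f := by
  have key : ∀ n, ∀ F ∈ grow^[n] [18], Psi s F f = Psi s 18 f := by
    intro n
    induction n with
    | zero =>
      intro F hF
      simp at hF
      rw [hF]
    | succ n ih =>
      intro F hF
      rw [Function.iterate_succ_apply'] at hF
      set S := grow^[n] [18]
      rw [grow, List.mem_filter] at hF
      obtain ⟨h1, h2⟩ := hF
      simp only [Bool.or_eq_true, List.any_eq_true, Bool.and_eq_true, decide_eq_true_eq,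
        List.contains_iff_mem] at h2
      rcases h2 with h2 | ⟨a, _, b, _, hab, h2⟩
      · exact ih F h2
      · have := Psi_kill s h1 (h a b hab)
        rw [map_sub, sub_eq_zero, Psi_tv s F (flags_lt h1) a b hab] at this
        rw [← this]
        exact ih _ h2
  exact fun F hF => key 5 F (grow_all F hF)

def L7 : Finset ℕ := {2, 4, 6, 8, 10, 12, 14}

theorem sum7_1 (f : P4) : ∑ l ∈ L7, Psi 1 (l * 16 + 1) f = 0 := by
  have e : ∀ l ∈ L7, Psi 1 (l * 16 + 1) f = ∑ i, vec l i * AF 0 (vec 1) 0 (kp i f) := by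
    intro l hl
    rw [Psi, show (l * 16 + 1) / 16 = l by omega, show (l * 16 + 1) % 16 = 1 by omega, AF_succ]
    rfl
  have h : ∀ i : Fin 4, ∑ l ∈ L7, vec l i = 0 := by unfold vec L7; decide +kernel
  rw [Finset.sum_congr rfl e, Finset.sum_comm]
  simp only [← Finset.sum_mul, h, zero_mul, Finset.sum_const_zero]

theorem sum7_2 (f : P4) : ∑ l ∈ L7, Psi 2 (l * 16 + 1) f = 0 := by
  have e : ∀ l ∈ L7, Psi 2 (l * 16 + 1) f =
      ∑ i, ∑ j, (vec l i * vec l j) * AF 0 (vec 1) 0 (kp j (kp i f)) := by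
    intro l hl
    rw [Psi, show (l * 16 + 1) / 16 = l by omega, show (l * 16 + 1) % 16 = 1 by omega, AF_succ]
    refine Finset.sum_congr rfl fun i _ => ?_
    rw [AF_succ, Finset.mul_sum]
    refine Finset.sum_congr rfl fun j _ => ?_
    rw [mul_assoc]
    rfl
  have h : ∀ i j : Fin 4, ∑ l ∈ L7, vec l i * vec l j = 0 := by unfold vec L7; decide +kernel
  rw [Finset.sum_congr rfl e, Finset.sum_comm]
  refine Finset.sum_eq_zero fun i _ => ?_
  rw [Finset.sum_comm]
  simp only [← Finset.sum_mul, h, zero_mul, Finset.sum_const_zero]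

theorem inv_psi_zero (s : ℕ) (f : P4) (h : ∀ a b, a ≠ b → tv a b f - f ∈ hitSub (nn s))
    (h7 : ∑ l ∈ L7, Psi s (l * 16 + 1) f = 0) : ∀ F ∈ flags, Psi s F f = 0 := by
  have h1 := inv_const s f h
  have h2 : ∀ l ∈ L7, l * 16 + 1 ∈ flags := by unfold L7; decide +kernel
  rw [Finset.sum_congr rfl fun l hl => h1 _ (h2 l hl), Finset.sum_const] at h7
  have h3 : Psi s 18 f = 0 := by
    rcases kk_cases (Psi s 18 f) with h4 | h4
    · exact h4
    · rw [h4] at h7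
      exact absurd h7 (by decide)
  intro F hF
  rw [h1 F hF, h3]

def LL (s : ℕ) (cs : List ℕ) : P4 := (cs.map (cw s)).sum

theorem homog_LL (s : ℕ) (cs : List ℕ) : LL s cs ∈ homog (nn s) := by
  induction cs with
  | nil => exact Submodule.zero_mem _
  | cons c cs ih =>
    rw [LL, List.map_cons, List.sum_cons]
    exact Submodule.add_mem _ (homog_cw s c) ih

theorem Psi_LL (s F : ℕ) (hF : F < 256) (cs : List ℕ) (h : ∀ c ∈ cs, c < 256 ∧ valid s c = true) :
    Psi s F (LL s cs) = ((cs.filter fun c => sub c F).length : kk) := by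
  induction cs with
  | nil => simp [LL]
  | cons c cs ih =>
    have h1 := h c List.mem_cons_self
    have h2 := ih fun y hy => h y (List.mem_cons_of_mem _ hy)
    rw [LL, List.map_cons, List.sum_cons, map_add, ← LL, h2, Psi_cw s c F h1.1 hF h1.2,
      List.filter_cons]
    split_ifs
    · rw [List.length_cons]; push_cast; ring
    · rw [zero_add]

theorem F0_valid : ∀ c ∈ F0, c < 256 ∧ valid 3 c = true := by decide +kernel

theorem F0_val : ∀ F ∈ flags, ((F0.filter fun c => sub c F).length : kk) = 1 := by
  decide +kernel

theorem F0_one (s : ℕ) (hs : 3 ≤ s) : ∀ F ∈ flags, Psi s F (LL s F0) = 1 := by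
  intro F hF
  rw [Psi_LL s F (flags_lt hF) F0, F0_val F hF]
  intro c hc
  obtain ⟨h1, h2⟩ := F0_valid c hc
  refine ⟨h1, ?_⟩
  simp only [valid, Bool.and_eq_true, decide_eq_true_eq] at h2 ⊢
  omega

theorem recon3 (s : ℕ) (hs : 3 ≤ s) (f : P4)
    (hf : f ∈ homog (nn s)) (h0 : ∀ F ∈ flags, Psi s F f = 0) : f ∈ hitSub (nn s) := by
  by_cases h : s = 3
  · exact recon s 3 (by omega) hs (Or.inr h.symm) _ le_rfl [] D3 (by simp) chk3 f hf h0
  · exact recon s 4 (by omega) (by omega) (Or.inl rfl) _ le_rfl [] D3 (by simp) chk4 f hf h0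

theorem base_flag : 18 ∈ flags := by decide +kernel

theorem case3 (s : ℕ) (hs : 3 ≤ s) : Module.finrank kk ↥(QInv (nn s) glSet) = 1 := by
  have hone := F0_one s hs
  have hhom := homog_LL s F0
  refine fin_one (nn s) (LL s F0) ?_ ?_ ?_
  · rw [mem_invPre]
    refine ⟨hhom, fun a b hab => ?_⟩
    refine recon3 s hs _ (Submodule.sub_mem _ (tv_homog a b hhom) hhom) ?_
    intro F hF
    rw [map_sub, Psi_tv s F (flags_lt hF) a b hab, hone F hF, hone _ (tF_flags F hF a b hab), sub_self]
  · intro h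
    have h1 := Psi_kill s base_flag h
    rw [hone _ base_flag] at h1
    exact one_ne_zero h1
  · intro f hf
    rw [mem_invPre] at hf
    have hc := inv_const s f hf.2
    rcases kk_cases (Psi s 18 f) with h | h
    · left
      exact recon3 s hs f hf.1 fun F hF => by rw [hc F hF, h]
    · right
      exact recon3 s hs _ (Submodule.sub_mem _ hf.1 hhom) fun F hF => by
        rw [map_sub, hc F hF, h, hone F hF, sub_self]

def ZZ : P4 := LL 1 Zc

theorem homog_Z : ZZ ∈ homog (nn 1) := homog_LL 1 Zc

theorem Z_valid : ∀ c ∈ Zc, c < 256 ∧ valid 1 c = true := by decide +kernel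

theorem Z_val : ∀ F ∈ flags, ((Zc.filter fun c => sub c F).length : kk) = 0 := by
  decide +kernel

theorem Psi_Z : ∀ F ∈ flags, Psi 1 F ZZ = 0 := by
  intro F hF
  rw [ZZ, Psi_LL 1 F (flags_lt hF) Zc Z_valid, Z_val F hF]

theorem Z_eq : ZZ = cw 1 17 + cw 1 34 + cw 1 68 + cw 1 136 := by
  simp [ZZ, LL, Zc]; ring

theorem Z_LP : LP 1 Zm = ZZ := by
  have : Zm = 2 ^ 17 ^^^ 2 ^ 34 ^^^ 2 ^ 68 ^^^ 2 ^ 136 := by decide +kernel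
  rw [this, LP_xor, LP_xor, LP_xor, LP_bit _ _ (by norm_num), LP_bit _ _ (by norm_num),
    LP_bit _ _ (by norm_num), LP_bit _ _ (by norm_num), Z_eq]

theorem recon1 (f : P4) (hf : f ∈ homog (nn 1)) (h0 : ∀ F ∈ flags, Psi 1 F f = 0) :
    f ∈ hitSub (nn 1) ∨ f - ZZ ∈ hitSub (nn 1) := by
  have := recon 1 1 le_rfl le_rfl (Or.inr rfl) (hitSub (nn 1) ⊔ Submodule.span kk {ZZ}) le_sup_left
    [Zm] D1 (by
      intro r hr
      rw [List.mem_singleton] at hr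
      rw [hr, Z_LP]
      exact Submodule.mem_sup_right (Submodule.mem_span_singleton_self _)) chk1 f hf h0
  obtain ⟨y, hy, z, hz, e⟩ := Submodule.mem_sup.1 this
  obtain ⟨c, rfl⟩ := Submodule.mem_span_singleton.1 hz
  rcases kk_cases c with rfl | rfl
  · left; rw [← e]; simpa using hy
  · right; rw [← e]; simpa using hy

def phi (i : Fin 4) : P4 →ₗ[kk] kk :=
  ∑ p ∈ (Finset.range 16).filter (fun p => p.testBit i ∧ ∀ j < i, ¬ p.testBit j),
    (aeval (vec p) : P4 →ₐ[kk] kk).toLinearMap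

theorem phi_apply (i : Fin 4) (f : P4) : phi i f =
    ∑ p ∈ (Finset.range 16).filter (fun p => p.testBit i ∧ ∀ j < i, ¬ p.testBit j),
      aeval (vec p) f := by
  rw [phi, LinearMap.sum_apply]; rfl

theorem Z_not_hit : ZZ ∉ hitSub (nn 1) := by
  intro h
  have h1 : ∀ i, hitSub (2 + 1) ≤ LinearMap.ker (phi i) := by
    intro i f hf
    rw [LinearMap.mem_ker, phi_apply]
    exact Finset.sum_eq_zero fun p _ => eval_kill (vec p) hf
  have h2 : ∀ h ∈ homog 2, ∑ i, phi i (X i * h) = 0 := by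
    have : homog 2 ≤ LinearMap.ker (∑ i, (phi i).comp (LinearMap.mulLeft kk (X i))) := by
      apply homog_ind
      intro m hm
      obtain ⟨i, m1, h1, e1⟩ := mono_split m 1 hm
      obtain ⟨j, m2, h2, e2⟩ := mono_split m1 0 h1
      have : m2 = 0 := (Finsupp.degree_eq_zero_iff m2).1 h2
      subst this
      have e3 : (monomial 0 (1 : kk) : P4) = 1 := rfl
      rw [e1, e2, e3, LinearMap.mem_ker, LinearMap.sum_apply]
      simp only [LinearMap.comp_apply, LinearMap.mulLeft_apply, phi_apply, map_mul, aeval_X, map_one,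
        mul_one]
      revert i j
      intro i _ j _
      clear * -
      revert i j
      unfold vec
      decide +kernel
    intro h hh
    have := this hh
    rw [LinearMap.mem_ker, LinearMap.sum_apply] at this
    exact this
  have h3 := kill_step phi h1 h2 h
  have e : ∀ i j : Fin 4, kp i (EW [j] (mono [j, j, j])) = if j = i then mono [j, j, j] else 0 := by
    intro i j
    rw [EW, EW, kp_Xh]
  have ez : ZZ = ∑ j, EW [j] (mono [j, j, j]) := by
    rw [Z_eq, Fin.sum_univ_four]; rfl
  rw [LinearMap.mem_ker, LinearMap.sum_apply, ez] at h3
  simp only [LinearMap.comp_apply, map_sum, e, Finset.sum_ite_eq', Finset.sum_ite_eq,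
    Finset.mem_univ, if_true, apply_ite, map_zero] at h3
  simp only [phi_apply, aeval_mono] at h3
  revert h3
  unfold vec
  decide +kernel

theorem tv_tv (a b : Fin 4) (hab : a ≠ b) (f : P4) : tv a b (tv a b f) = f := by
  have : (tv a b).comp (tv a b) = AlgHom.id kk P4 := by
    apply MvPolynomial.algHom_ext
    intro i
    simp only [AlgHom.comp_apply, tv, aeval_X, AlgHom.id_apply]
    split_ifs with h
    · subst h
      simp only [map_add, aeval_X, if_true, if_neg hab.symm]
      linear_combination p4_two (X b)
    · simp only [aeval_X, if_neg h]
  exact AlgHom.congr_fun this f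

theorem Z_tv (a b : Fin 4) (hab : a ≠ b) : tv a b ZZ - ZZ ∈ hitSub (nn 1) := by
  have := recon1 (tv a b ZZ) (tv_homog a b homog_Z) (fun F hF => by
    rw [Psi_tv 1 F (flags_lt hF) a b hab, Psi_Z _ (tF_flags F hF a b hab)])
  rcases this with h | h
  · have := tv_hit a b h
    rw [tv_tv a b hab] at this
    exact absurd this Z_not_hit
  · exact h

theorem case1 : Module.finrank kk ↥(QInv (nn 1) glSet) = 1 := by
  refine fin_one (nn 1) ZZ ?_ Z_not_hit ?_
  · rw [mem_invPre]
    exact ⟨homog_Z, Z_tv⟩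
  · intro f hf
    rw [mem_invPre] at hf
    exact recon1 f hf.1 (inv_psi_zero 1 f hf.2 (sum7_1 f))

def yy (i : Fin 4) : P4 := Xh i * ZZ ^ 2

theorem y_cw (i : Fin 4) (c : ℕ) (hc : c ∈ Zc) :
    cw 2 ((c / 16 ||| 2 ^ i.val) * 16 + c % 16) - Xh i * (cw 1 c) ^ 2 ∈ hitSub (nn 2) := by
  obtain ⟨hc1, hv⟩ := Z_valid c hc
  simp only [valid, Bool.and_eq_true, decide_eq_true_eq] at hv
  obtain ⟨⟨⟨h1, h2⟩, h3⟩, h4⟩ := hv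
  obtain ⟨l1, l2⟩ := bits_or_len (c / 16) (by omega) i
  have e1 : ((c / 16 ||| 2 ^ i.val) * 16 + c % 16) / 16 = c / 16 ||| 2 ^ i.val := by omega
  have e2 : ((c / 16 ||| 2 ^ i.val) * 16 + c % 16) % 16 = c % 16 := by omega
  have := EW_all (wd 2 (c / 16 ||| 2 ^ i.val)) (i :: wd 1 (c / 16)) (wd 3 (c % 16)) (wd 3 (c % 16))
    (by rw [List.length_cons, wd_length, wd_length])
    (by rw [List.toFinset_cons, wd_fs _ _ l1 (by omega), wd_fs _ _ h1 h2, bits_or _ (by omega)])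
    (wd_length _ _) (wd_length _ _) rfl
  rw [wd_length] at this
  rw [cw, e1, e2]
  exact this

theorem y_LP (i : Fin 4) : LP 2 (Ym[i.val]!) - yy i ∈ hitSub (nn 2) := by
  have h : ∀ i : Fin 4, Ym[i.val]! = 2 ^ ((17 / 16 ||| 2 ^ i.val) * 16 + 17 % 16) ^^^
      2 ^ ((34 / 16 ||| 2 ^ i.val) * 16 + 34 % 16) ^^^
      2 ^ ((68 / 16 ||| 2 ^ i.val) * 16 + 68 % 16) ^^^
      2 ^ ((136 / 16 ||| 2 ^ i.val) * 16 + 136 % 16) := by decide +kernel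
  have hl : ∀ c ∈ Zc, ∀ i : Fin 4, (c / 16 ||| 2 ^ i.val) * 16 + c % 16 < 256 := by decide +kernel
  have m1 : 17 ∈ Zc := by decide
  have m2 : 34 ∈ Zc := by decide
  have m3 : 68 ∈ Zc := by decide
  have m4 : 136 ∈ Zc := by decide
  rw [h, LP_xor, LP_xor, LP_xor, LP_bit _ _ (hl _ m1 i), LP_bit _ _ (hl _ m2 i),
    LP_bit _ _ (hl _ m3 i), LP_bit _ _ (hl _ m4 i), yy, Z_eq]
  have := Submodule.add_mem _ (Submodule.add_mem _ (Submodule.add_mem _ (y_cw i _ m1) (y_cw i _ m2))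
    (y_cw i _ m3)) (y_cw i _ m4)
  convert this using 1
  simp only [p4_add_sq]
  ring

theorem recon2 (f : P4) (hf : f ∈ homog (nn 2)) (h0 : ∀ F ∈ flags, Psi 2 F f = 0) :
    ∃ c : Fin 4 → kk, f - ∑ i, c i • yy i ∈ hitSub (nn 2) := by
  have := recon 2 2 (by norm_num) le_rfl (Or.inr rfl)
    (hitSub (nn 2) ⊔ Submodule.span kk (Set.range yy)) le_sup_left
    Ym D2 (by
      have h1 : ∀ r ∈ Ym, ∃ i : Fin 4, r = Ym[i.val]! := by decide +kernel
      intro r hr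
      obtain ⟨i, rfl⟩ := h1 r hr
      have := Submodule.add_mem _ (Submodule.mem_sup_left (y_LP i))
        (Submodule.mem_sup_right (Submodule.subset_span (Set.mem_range_self i)) :
          yy i ∈ hitSub (nn 2) ⊔ Submodule.span kk (Set.range yy))
      rwa [sub_add_cancel] at this) chk2 f hf h0
  obtain ⟨y, hy, z, hz, e⟩ := Submodule.mem_sup.1 this
  obtain ⟨c, rfl⟩ := (Submodule.mem_span_range_iff_exists_fun kk).1 hz
  refine ⟨c, ?_⟩
  rw [← e, add_sub_cancel_right]
  exact hy

theorem y_tv (a b : Fin 4) (hab : a ≠ b) (i : Fin 4) :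
    tv a b (yy i) - (yy i + if i = b then yy a else 0) ∈ hitSub (nn 2) := by
  have hz : ∀ j, Xh j * (tv a b ZZ) ^ 2 - yy j ∈ hitSub (nn 2) := fun j =>
    Hq.step j (Z_tv a b hab)
  have e : tv a b (yy i) = Xh i * (tv a b ZZ) ^ 2 +
      (if a ∈ ({i}ᶜ : Finset (Fin 4)) then X b * mon (({i}ᶜ : Finset (Fin 4)).erase a) else 0) *
        (tv a b ZZ) ^ 2 := by
    rw [yy, map_mul, map_pow, Xh_eq, tv_mon]; ring
  rw [e]
  by_cases h1 : i = a
  · subst h1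
    rw [if_neg (by simp), if_neg hab]
    simpa using hz i
  · rw [if_pos (by simpa using Ne.symm h1)]
    by_cases h2 : i = b
    · subst h2
      have f1 : ∀ a i : Fin 4, a ≠ i → i ∉ ({i}ᶜ : Finset (Fin 4)).erase a ∧
        insert i (({i}ᶜ : Finset (Fin 4)).erase a) = {a}ᶜ := by decide
      have e2 : X i * mon (({i}ᶜ : Finset (Fin 4)).erase a) = Xh a := by
        rw [Xh_eq, ← (f1 a i hab).2, mon, mon, Finset.prod_insert (f1 a i hab).1]
      rw [e2, if_pos rfl, add_sub_add_comm]
      exact Submodule.add_mem _ (hz i) (hz a)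
    · rw [if_neg h2, add_zero]
      have f1 : ∀ a b i : Fin 4, a ≠ b → i ≠ a → i ≠ b → ∃ c,
        ({i}ᶜ : Finset (Fin 4)).erase a = {c, b} ∧ c ≠ b := by decide
      obtain ⟨c, c1, c2⟩ := f1 a b i hab h1 h2
      have e2 : X b * mon (({i}ᶜ : Finset (Fin 4)).erase a) * (tv a b ZZ) ^ 2 =
          X c * (X b * tv a b ZZ) ^ 2 := by
        rw [c1, mon, Finset.prod_pair c2]; ring
      rw [e2, add_sub_right_comm]
      refine Submodule.add_mem _ (hz i) (hit_one c ?_)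
      rw [add_comm]
      exact homog_mul (homog_X b) (tv_homog a b homog_Z)

theorem case2 : Module.finrank kk ↥(QInv (nn 2) glSet) = 0 := by
  refine fin_zero _ fun f hf => ?_
  rw [mem_invPre] at hf
  obtain ⟨c, hc⟩ := recon2 f hf.1 (inv_psi_zero 2 f hf.2 (sum7_2 f))
  have h1 : ∀ a b, a ≠ b → c b • yy a ∈ hitSub (nn 2) := by
    intro a b hab
    have t1 := tv_hit a b hc
    have t2 := hf.2 a b hab
    have t3 := Submodule.sum_mem _ fun i (_ : i ∈ Finset.univ) =>
      Submodule.smul_mem _ (c i) (y_tv a b hab i)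
    have t4 := Submodule.sub_mem _ (Submodule.sub_mem _ (Submodule.sub_mem _ t2 t1) t3)
      (Submodule.neg_mem _ hc)
    convert t4 using 1
    have e : ∑ i, c i • (if i = b then yy a else 0) = c b • yy a := by
      simp only [smul_ite, smul_zero, Finset.sum_ite_eq', Finset.mem_univ, if_true]
    rw [← e]
    simp only [map_sub, map_sum, map_smul, smul_sub, smul_add, Finset.sum_sub_distrib,
      Finset.sum_add_distrib]
    ring
  have h2 : ∑ i, c i • yy i ∈ hitSub (nn 2) := by
    by_cases h : ∀ i, c i = 0
    · simp [h]
    · push Not at h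
      obtain ⟨b, hb⟩ := h
      have hb1 : c b = 1 := (kk_cases (c b)).resolve_left hb
      have h3 : ∀ a, a ≠ b → yy a ∈ hitSub (nn 2) := by
        intro a hab
        have := h1 a b hab
        rwa [hb1, one_smul] at this
      have h4 : yy b ∈ hitSub (nn 2) := by
        obtain ⟨a, ha⟩ : ∃ a : Fin 4, a ≠ b := exists_ne b
        have t1 := y_tv b a ha.symm a
        rw [if_pos rfl] at t1
        have t2 := Submodule.sub_mem _ (Submodule.sub_mem _ (tv_hit b a (h3 a ha)) t1) (h3 a ha)
        convert t2 using 1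
        ring
      refine Submodule.sum_mem _ fun i _ => Submodule.smul_mem _ _ ?_
      by_cases hi : i = b
      · rw [hi]; exact h4
      · exact h3 i hi
  have := Submodule.add_mem _ hc h2
  rwa [sub_add_cancel] at this

/-- In degree `n = 3(2^s-1) + 3·2^s = 6·2^s - 3` (`s ≥ 1`), the space of
`GL_4(F_2)`-invariants of `Q_n` (equivalently, the domain of Singer's fourth transfer)
has dimension `0` if `s = 2` and dimension `1` if `s ≠ 2`. -/
theorem statement_0 (s n : ℕ) (hs : 1 ≤ s)
    (hn : n = 3 * (2 ^ s - 1) + 3 * 2 ^ s) :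
    (s = 2 → Module.finrank kk ↥(QInv n glSet) = 0) ∧
    (s ≠ 2 → Module.finrank kk ↥(QInv n glSet) = 1) := by
  have hn' : n = nn s := hn.trans (nn_eq s).symm
  subst hn'
  refine ⟨fun h => ?_, fun h => ?_⟩
  · subst h
    exact case2
  · by_cases h1 : s = 1
    · subst h1
      exact case1
    · exact case3 s (by omega)

end
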